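/- arXiv:1411.1826 — 3 statements merged into one kernel-verified Lean document; each statement's English description precedes it below -/
import Mathlib

section
/- Let τ: Ω → Ω' be an isometry of Hilbert geometries, let I₁ and I₂ be the relative interiors of two opposite rigid faces of the closure of Ω, and let J be the join of I₁ and I₂. Let L be a line in Ω from I₁ to I₂ and let I₁', I₂' be the relative interiors of the faces of the closure of Ω' containing the two accumulation points of τ(L) in ∂Ω' (with I₁' containing the image of the end of L at I₁). Then I₁' and I₂' are opposite rigid faces of the closure of Ω', their join J' is rigid, and τ(J) = J'. -/
/-!
A line in `Ω` with ends `a`, `b` is parametrised by `geo a b : ℝ → Ω`, along which the Hilbert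
distance is `|s - t|`. The uniqueness of geodesics on a rigid line passes through the isometry,
so `τ` carries a rigid line onto a rigid line, up to a shift of the parameter
(`image_rigid_line`).

The Hilbert distance of `x` and `y` is bounded in terms of how far the segment `[x, y]` can be
prolonged at both ends inside the closure of `Ω`, relative to its length, and conversely
(`hilbertDist_le`, `prolong_of_hilbertDist_le`). Consequently two lines joining the same pair of
relatively open faces stay at bounded distance from each other (`exists_dist_bound`), while
curves at bounded distance accumulate in the same relatively open face
(`mem_relint_of_asymptotic`). Since `τ` preserves bounded distance, `τ(J) ⊆ J'`
(`image_join_subset`), and the reverse inclusion is the same statement for the inverse of `τ`.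

It remains to see that all the lines of `J'` are rigid, knowing that one of them, `τ(L)`, is.
A line from `a` in the relative interior of `F₁` to `b` in the relative interior of `F₂` fails
to be rigid exactly when `F₁` and `F₂` contain directions that span, together with `b - a`,
a single plane (`CoplanarDirs`), and this condition does not depend on the choice of `a` and `b`
(`rigid_transfer`). From left to right this is the equality case of the triangle inequality:
positive affine functions `g`, `k` on `Ω` vanishing at the ends of the line bound the distance
below by the variation of `log k - log g` (`logVar`), which is additive, so equality forces
the lines through a third point of the geodesic to end on the zero sets of `g` and `k` as well.
-/

open Set
open scoped LinearAlgebra.Projectivization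
open scoped Classical

noncomputable section

abbrev Euc (n : ℕ) := EuclideanSpace ℝ (Fin n)

/-- `α` and `β` are the two points where the straight line through `x` and `y`
meets the boundary of `Ω`, labeled so that `|α−x| < |α−y|` and `|β−y| < |β−x|`. -/
def IsHilbertPair {n : ℕ} (Ω : Set (Euc n)) (x y α β : Euc n) : Prop :=
  α ∈ frontier Ω ∧ β ∈ frontier Ω ∧
    Collinear ℝ ({α, x, y} : Set (Euc n)) ∧ Collinear ℝ ({β, x, y} : Set (Euc n)) ∧
    dist α x < dist α y ∧ dist β y < dist β x

/-- The Hilbert metric of `Ω`: `d_Ω(x,y) = ln((|α−y|/|α−x|)·(|β−x|/|β−y|))` for `x ≠ y`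
(where `α, β` are as in `IsHilbertPair`; for `x ≠ y` in a convex domain `Ω` such a pair
exists and is unique), and `d_Ω(x,x) = 0` (no such pair exists when `x = y`). -/
def hilbertDist {n : ℕ} (Ω : Set (Euc n)) (x y : Euc n) : ℝ :=
  if h : ∃ p : Euc n × Euc n, IsHilbertPair Ω x y p.1 p.2 then
    Real.log ((dist h.choose.1 y / dist h.choose.1 x) * (dist h.choose.2 x / dist h.choose.2 y))
  else 0

/-- An isometry of Hilbert geometries: a surjective distance preserving map. -/
def IsHilbertIsometry {n : ℕ} (Ω Ω' : Set (Euc n)) (τ : Euc n → Euc n) : Prop :=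
  Set.MapsTo τ Ω Ω' ∧ Set.SurjOn τ Ω Ω' ∧
    ∀ x ∈ Ω, ∀ y ∈ Ω, hilbertDist Ω' (τ x) (τ y) = hilbertDist Ω x y

/-- The standard affine chart `ℝⁿ → ℝPⁿ`, `x ↦ [x : 1]`. -/
def chart {n : ℕ} (x : Euc n) : Projectivization ℝ (Fin (n + 1) → ℝ) :=
  Projectivization.mk ℝ ((Fin.snoc (fun i => x i) 1 : Fin (n + 1) → ℝ))
    (fun h => one_ne_zero (α := ℝ) (by simpa using congrFun h (Fin.last n)))

/-- The projective transformation of `ℝPⁿ` induced by an element of `GL_{n+1}(ℝ)`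
(every element of `PGL_{n+1}(ℝ)` arises this way). -/
def projMap {n : ℕ} (g : (Fin (n + 1) → ℝ) ≃ₗ[ℝ] (Fin (n + 1) → ℝ)) :
    Projectivization ℝ (Fin (n + 1) → ℝ) → Projectivization ℝ (Fin (n + 1) → ℝ) :=
  Projectivization.map (g : (Fin (n + 1) → ℝ) →ₗ[ℝ] (Fin (n + 1) → ℝ)) g.injective

/-- `τ` agrees on `Ω` with (the restriction of) a projective transformation of `ℝPⁿ`. -/
def IsProjectiveOn {n : ℕ} (Ω : Set (Euc n)) (τ : Euc n → Euc n) : Prop :=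
  ∃ g : (Fin (n + 1) → ℝ) ≃ₗ[ℝ] (Fin (n + 1) → ℝ),
    ∀ x ∈ Ω, chart (τ x) = projMap g (chart x)

/-- A ray in `Ω`: the intersection with `Ω` of a Euclidean ray starting at a point of `Ω`. -/
def IsRayIn {n : ℕ} (Ω r : Set (Euc n)) : Prop :=
  ∃ p ∈ Ω, ∃ d : Euc n, d ≠ 0 ∧ r = {x | ∃ t : ℝ, 0 ≤ t ∧ x = p + t • d} ∩ Ω

/-- A line in `Ω`: the nonempty intersection of a straight line with `Ω`. -/
def IsLineIn {n : ℕ} (Ω L : Set (Euc n)) : Prop :=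
  L.Nonempty ∧ ∃ p d : Euc n, d ≠ 0 ∧ L = {x | ∃ t : ℝ, x = p + t • d} ∩ Ω

/-- `a` is an accumulation point of the set `s ⊆ Ω` on the boundary of `Ω`.
For a ray `r` in a convex domain `Ω` there is exactly one such point, denoted `a(r)`. -/
def IsBdryLimit {n : ℕ} (Ω s : Set (Euc n)) (a : Euc n) : Prop :=
  a ∈ frontier Ω ∧ a ∈ closure s

/-- `e` is a focusing point of the isometry `τ : Ω → Ω'`: an extreme point of the closure
of `Ω` such that for any two rays `r₁, r₂` in `Ω` with `a(r₁) = a(r₂) = e` one has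
`a(τ(r₁)) = a(τ(r₂))`. -/
def IsFocusingPoint {n : ℕ} (Ω Ω' : Set (Euc n)) (τ : Euc n → Euc n) (e : Euc n) : Prop :=
  e ∈ Set.extremePoints ℝ (closure Ω) ∧
    ∀ r₁ r₂ : Set (Euc n), IsRayIn Ω r₁ → IsRayIn Ω r₂ →
      IsBdryLimit Ω r₁ e → IsBdryLimit Ω r₂ e →
      ∀ a₁ a₂ : Euc n, IsBdryLimit Ω' (τ '' r₁) a₁ → IsBdryLimit Ω' (τ '' r₂) a₂ → a₁ = a₂

/-- An extreme line in `Ω`: a line in `Ω` whose closure meets `∂Ω` in extreme points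
of the closure of `Ω`. -/
def IsExtremeLine {n : ℕ} (Ω L : Set (Euc n)) : Prop :=
  IsLineIn Ω L ∧ ∀ x ∈ closure L ∩ frontier Ω, x ∈ Set.extremePoints ℝ (closure Ω)

/-- `s` is rigid in `Ω`: for any two points `a, b` of `s` the segment `[a,b]` is the
unique geodesic from `a` to `b` in `(Ω, d_Ω)`, i.e. every point `z` with
`d(a,z) + d(z,b) = d(a,b)` lies on the segment `[a,b]`. -/
def IsRigidSet {n : ℕ} (Ω s : Set (Euc n)) : Prop :=
  ∀ a ∈ s, ∀ b ∈ s, ∀ z ∈ Ω,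
    hilbertDist Ω a z + hilbertDist Ω z b = hilbertDist Ω a b → z ∈ segment ℝ a b

/-- A face of a closed convex set `C`: a convex subset `F ⊆ C` such that whenever an open
segment between two points of `C` meets `F`, the whole closed segment lies in `F`. -/
def IsFace {n : ℕ} (C F : Set (Euc n)) : Prop :=
  Convex ℝ F ∧ IsExtreme ℝ C F

/-- A face of `C` which is neither empty nor all of `C`. -/
def IsProperFace {n : ℕ} (C F : Set (Euc n)) : Prop :=
  IsFace C F ∧ F.Nonempty ∧ F ≠ C

/-- `Ω` is a cone with vertex `v` and base `B`: `B` is an `(n−1)`-dimensional convex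
domain lying in a hyperplane not containing `v`, and `Ω` is the union of the open
segments from `v` to the points of `B`. -/
def IsConeWith {n : ℕ} (Ω : Set (Euc n)) (v : Euc n) (B : Set (Euc n)) : Prop :=
  ∃ (f : Euc n →ₗ[ℝ] ℝ) (c : ℝ), f ≠ 0 ∧ (∀ b ∈ B, f b = c) ∧ f v ≠ c ∧
    B.Nonempty ∧ Convex ℝ B ∧ Bornology.IsBounded B ∧
    B = intrinsicInterior ℝ B ∧
    (affineSpan ℝ B : Set (Euc n)) = {x | f x = c} ∧
    Ω = ⋃ b ∈ B, openSegment ℝ v b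

/-- `Ω` is a cone. -/
def IsCone {n : ℕ} (Ω : Set (Euc n)) : Prop :=
  ∃ v B, IsConeWith Ω v B

/-- `L` is a line in `Ω` whose two accumulation points on `∂Ω` are `a` and `b`. -/
def IsLineFromTo {n : ℕ} (Ω L : Set (Euc n)) (a b : Euc n) : Prop :=
  IsLineIn Ω L ∧ a ≠ b ∧ a ∈ frontier Ω ∧ b ∈ frontier Ω ∧ a ∈ closure L ∧ b ∈ closure L

/-- The join of `I₁` and `I₂` in `Ω`: the union of all lines in `Ω` from `I₁` to `I₂`. -/
def joinOf {n : ℕ} (Ω I₁ I₂ : Set (Euc n)) : Set (Euc n) :=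
  {x | ∃ L a b, IsLineFromTo Ω L a b ∧ a ∈ I₁ ∧ b ∈ I₂ ∧ x ∈ L}

/-- `I₁` and `I₂` are opposite: there is a line in `Ω` from `I₁` to `I₂`. -/
def AreOpposite {n : ℕ} (Ω I₁ I₂ : Set (Euc n)) : Prop :=
  ∃ L a b, IsLineFromTo Ω L a b ∧ a ∈ I₁ ∧ b ∈ I₂

/-- `I₁` and `I₂` are opposite rigid (relative interiors of) faces: they are opposite and
every line in `Ω` from `I₁` to `I₂` is rigid; equivalently, their join is rigid. -/
def AreOppositeRigid {n : ℕ} (Ω I₁ I₂ : Set (Euc n)) : Prop :=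
  AreOpposite Ω I₁ I₂ ∧
    ∀ L a b, IsLineFromTo Ω L a b → a ∈ I₁ → b ∈ I₂ → IsRigidSet Ω L

section

/-! ### Chords and their arc-length parametrisation -/

/-- A bounded open convex set, the domain of a Hilbert geometry. -/
structure CvxDom {n : ℕ} (Ω : Set (Euc n)) : Prop where
  op : IsOpen Ω
  bd : Bornology.IsBounded Ω
  cv : Convex ℝ Ω

/-- `a` and `b` are the two ends of a line in `Ω`: boundary points such that the open
segment between them lies in `Ω`. -/
def IsChord {n : ℕ} (Ω : Set (Euc n)) (a b : Euc n) : Prop :=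
  a ∈ frontier Ω ∧ b ∈ frontier Ω ∧ ∀ k : ℝ, 0 < k → k < 1 → a + k • (b - a) ∈ Ω

/-- The parametrisation by Hilbert arc length of the line with ends `a` (at `-∞`) and `b`
(at `+∞`); the sigmoid function inverts `k ↦ log (k / (1 - k))`. -/
def geo {n : ℕ} (a b : Euc n) (t : ℝ) : Euc n := a + Real.sigmoid t • (b - a)

variable {n : ℕ} {Ω Ω' : Set (Euc n)} {a b c d x y z : Euc n}

lemma CvxDom.mid (D : CvxDom Ω) (hx : x ∈ Ω) (hy : y ∈ closure Ω) {k : ℝ} (h0 : 0 ≤ k)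
    (h1 : k < 1) : x + k • (y - x) ∈ Ω := by
  have := D.cv.combo_interior_closure_mem_interior (x := x) (y := y) (a := 1 - k) (b := k)
    (by rwa [D.op.interior_eq]) hy (by linarith) h0 (by ring)
  rw [D.op.interior_eq] at this
  convert this using 1
  module

lemma CvxDom.not_mem (D : CvxDom Ω) (h : x ∈ frontier Ω) : x ∉ Ω := by
  rw [D.op.frontier_eq] at h; exact h.2

lemma CvxDom.frontier_of (D : CvxDom Ω) (h : x ∈ closure Ω) (h' : x ∉ Ω) : x ∈ frontier Ω := by
  rw [D.op.frontier_eq]; exact ⟨h, h'⟩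

lemma mem_closure_of_frontier (h : x ∈ frontier Ω) : x ∈ closure Ω := frontier_subset_closure h

lemma IsChord.symm (h : IsChord Ω a b) : IsChord Ω b a := by
  refine ⟨h.2.1, h.1, fun k h0 h1 => ?_⟩
  have := h.2.2 (1 - k) (by linarith) (by linarith)
  convert this using 1
  module

lemma IsChord.ne (D : CvxDom Ω) (h : IsChord Ω a b) : a ≠ b := by
  rintro rfl
  have := h.2.2 (1/2) (by norm_num) (by norm_num)
  simp at this
  exact D.not_mem h.1 this

lemma IsChord.nonneg_of_mem (D : CvxDom Ω) (h : IsChord Ω a b) {k : ℝ}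
    (hk : a + k • (b - a) ∈ closure Ω) : 0 ≤ k := by
  by_contra hlt
  push Not at hlt
  have hx := h.2.2 (1/2) (by norm_num) (by norm_num)
  have h2 : 0 < 1/2 - k := by linarith
  have hm := D.mid hx hk (k := (1/2) / (1/2 - k)) (by positivity)
    (by rw [div_lt_one h2]; linarith)
  apply D.not_mem h.1
  convert hm using 1
  have : (1/2 : ℝ) + (1/2) / (1/2 - k) * (k - 1/2) = 0 := by
    have := div_mul_cancel₀ (1/2 : ℝ) h2.ne'
    linear_combination -this
  calc a = a + (0:ℝ) • (b - a) := by simp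
    _ = a + ((1/2 : ℝ) + (1/2) / (1/2 - k) * (k - 1/2)) • (b - a) := by rw [this]
    _ = _ := by module

lemma IsChord.le_one_of_mem (D : CvxDom Ω) (h : IsChord Ω a b) {k : ℝ}
    (hk : a + k • (b - a) ∈ closure Ω) : k ≤ 1 := by
  have := h.symm.nonneg_of_mem D (k := 1 - k) (by convert hk using 1; module)
  linarith

lemma IsChord.mem_closure (h : IsChord Ω a b) {k : ℝ} (h0 : 0 ≤ k) (h1 : k ≤ 1) :
    a + k • (b - a) ∈ closure Ω := by
  rcases h0.eq_or_lt with rfl | h0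
  · simpa using mem_closure_of_frontier h.1
  rcases h1.eq_or_lt with rfl | h1
  · simpa using mem_closure_of_frontier h.2.1
  exact subset_closure (h.2.2 k h0 h1)

lemma IsChord.pos_of_mem (D : CvxDom Ω) (h : IsChord Ω a b) {k : ℝ}
    (hk : a + k • (b - a) ∈ Ω) : 0 < k := by
  rcases (h.nonneg_of_mem D (subset_closure hk)).eq_or_lt with rfl | h0
  · exact absurd (by simpa using hk) (D.not_mem h.1)
  · exact h0

lemma IsChord.lt_one_of_mem (D : CvxDom Ω) (h : IsChord Ω a b) {k : ℝ}
    (hk : a + k • (b - a) ∈ Ω) : k < 1 := by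
  have := h.symm.pos_of_mem D (k := 1 - k) (by convert hk using 1; module)
  linarith

lemma geo_symm (a b : Euc n) (t : ℝ) : geo b a (-t) = geo a b t := by
  simp only [geo, Real.sigmoid_neg]; module

lemma IsChord.geo_mem (h : IsChord Ω a b) (t : ℝ) : geo a b t ∈ Ω :=
  h.2.2 _ (Real.sigmoid_pos t) (Real.sigmoid_lt_one t)

lemma exists_sigmoid {k : ℝ} (h0 : 0 < k) (h1 : k < 1) : ∃ t, Real.sigmoid t = k := by
  have : k ∈ range Real.sigmoid := by rw [Real.range_sigmoid]; exact ⟨h0, h1⟩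
  exact this

lemma IsChord.exists_geo (D : CvxDom Ω) (h : IsChord Ω a b) {k : ℝ}
    (hk : a + k • (b - a) ∈ Ω) : ∃ t, geo a b t = a + k • (b - a) := by
  obtain ⟨t, ht⟩ := exists_sigmoid (h.pos_of_mem D hk) (h.lt_one_of_mem D hk)
  exact ⟨t, by rw [geo, ht]⟩

lemma geo_mem_segment (a b : Euc n) {s t u : ℝ} (h1 : s ≤ u) (h2 : u ≤ t) :
    geo a b u ∈ segment ℝ (geo a b s) (geo a b t) := by
  have hs := Real.sigmoid_le h1
  have ht := Real.sigmoid_le h2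
  rcases (hs.trans ht).eq_or_lt with h | h
  · have e1 : Real.sigmoid u = Real.sigmoid s := by linarith
    rw [show geo a b u = geo a b s by rw [geo, geo, e1]]
    exact left_mem_segment _ _ _
  · rw [segment_eq_image']
    have hp : Real.sigmoid t - Real.sigmoid s ≠ 0 := by linarith
    refine ⟨(Real.sigmoid u - Real.sigmoid s) / (Real.sigmoid t - Real.sigmoid s),
      ⟨div_nonneg (by linarith) (by linarith), (div_le_one (by linarith)).2 (by linarith)⟩, ?_⟩
    have e : Real.sigmoid u = Real.sigmoid s +
      (Real.sigmoid u - Real.sigmoid s) / (Real.sigmoid t - Real.sigmoid s) *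
        (Real.sigmoid t - Real.sigmoid s) := by field_simp; ring
    simp only [geo]
    generalize (Real.sigmoid u - Real.sigmoid s) / (Real.sigmoid t - Real.sigmoid s) = q at e
    rw [e]; module

lemma exists_geo_of_mem_segment (a b : Euc n) {s t : ℝ} (hst : s ≤ t)
    (hz : z ∈ segment ℝ (geo a b s) (geo a b t)) : ∃ u, s ≤ u ∧ u ≤ t ∧ z = geo a b u := by
  rw [segment_eq_image'] at hz
  obtain ⟨q, ⟨h0, h1⟩, rfl⟩ := hz
  have hle := Real.sigmoid_le hst
  have l1 : Real.sigmoid s ≤ Real.sigmoid s + q * (Real.sigmoid t - Real.sigmoid s) := by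
    nlinarith
  have l2 : Real.sigmoid s + q * (Real.sigmoid t - Real.sigmoid s) ≤ Real.sigmoid t := by
    nlinarith
  obtain ⟨u, hu⟩ := exists_sigmoid ((Real.sigmoid_pos s).trans_le l1)
    (l2.trans_lt (Real.sigmoid_lt_one t))
  refine ⟨u, Real.sigmoid_le_iff.1 (hu ▸ l1), Real.sigmoid_le_iff.1 (hu ▸ l2), ?_⟩
  simp only [geo, hu]; module

lemma geo_injective (hab : a ≠ b) : Function.Injective (geo a b) := by
  intro s t h
  simp only [geo, add_right_inj] at h
  exact Real.sigmoid_injective (smul_left_injective ℝ (sub_ne_zero.2 hab.symm) h)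

/-- Every two points of a convex domain lie on a chord. -/
lemma CvxDom.exists_chord (D : CvxDom Ω) (hx : x ∈ Ω) (hy : y ∈ Ω) (hxy : x ≠ y) :
    ∃ a b s t, IsChord Ω a b ∧ s < t ∧ x = geo a b s ∧ y = geo a b t := by
  set f : ℝ → Euc n := fun k => x + k • (y - x) with hf
  have hfc : Continuous f := by fun_prop
  have hv : y - x ≠ 0 := sub_ne_zero.2 hxy.symm
  set S : Set ℝ := f ⁻¹' closure Ω with hS
  have hSc : IsClosed S := isClosed_closure.preimage hfc
  have hSb : Bornology.IsBounded S := by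
    obtain ⟨C, hC⟩ := D.bd.closure.exists_norm_le
    refine isBounded_iff_forall_norm_le.2 ⟨(C + ‖x‖) / ‖y - x‖, fun k hk => ?_⟩
    rw [le_div_iff₀ (norm_pos_iff.2 hv), ← norm_smul]
    calc ‖k • (y - x)‖ = ‖f k - x‖ := by simp [hf]
      _ ≤ ‖f k‖ + ‖x‖ := norm_sub_le _ _
      _ ≤ _ := by linarith [hC _ hk]
  have hScomp : IsCompact S := Metric.isCompact_of_isClosed_isBounded hSc hSb
  have h0S : (0:ℝ) ∈ S := by simpa [hS, hf] using subset_closure hx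
  have h1S : (1:ℝ) ∈ S := by simpa [hS, hf] using subset_closure hy
  obtain ⟨K, hKS, hK⟩ := hScomp.exists_isGreatest ⟨0, h0S⟩
  obtain ⟨k, hkS, hk⟩ := hScomp.exists_isLeast ⟨0, h0S⟩
  have hopen : IsOpen (f ⁻¹' Ω) := D.op.preimage hfc
  have hKn : f K ∉ Ω := fun h => by
    obtain ⟨e, he, hb⟩ := Metric.isOpen_iff.1 hopen K h
    have : K + e/2 ∈ f ⁻¹' Ω := hb (by simp [abs_of_pos he, he])
    have := hK (show K + e/2 ∈ S from subset_closure this)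
    linarith
  have hkn : f k ∉ Ω := fun h => by
    obtain ⟨e, he, hb⟩ := Metric.isOpen_iff.1 hopen k h
    have : k - e/2 ∈ f ⁻¹' Ω := hb (by simp [abs_of_pos he, he])
    have := hk (show k - e/2 ∈ S from subset_closure this)
    linarith
  have hK1 : 1 < K := by
    refine lt_of_le_of_ne (hK h1S) ?_
    rintro rfl; exact hKn (by simpa [hf] using hy)
  have hk0 : k < 0 := by
    refine lt_of_le_of_ne (hk h0S) ?_
    rintro rfl; exact hkn (by simpa [hf] using hx)
  have hch : IsChord Ω (f k) (f K) := by
    refine ⟨D.frontier_of hkS hkn, D.frontier_of hKS hKn, fun q h0 h1 => ?_⟩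
    have e : f k + q • (f K - f k) = f (k + q * (K - k)) := by simp only [hf]; module
    rw [e]
    set r := k + q * (K - k) with hr
    have r1 : r < K := by rw [hr]; nlinarith
    have r0 : k < r := by rw [hr]; nlinarith
    rcases le_total 0 r with h | h
    · have := D.mid hx hKS (k := r / K) (by positivity) ((div_lt_one (by linarith)).2 r1)
      convert this using 1
      have : r = r / K * K := by field_simp
      simp only [hf]
      generalize r / K = m at this
      rw [this]; module
    · have := D.mid hx hkS (k := r / k) (div_nonneg_of_nonpos h hk0.le)
        ((div_lt_one_of_neg hk0).2 r0)
      convert this using 1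
      have : r = r / k * k := (div_mul_cancel₀ r hk0.ne).symm
      simp only [hf]
      generalize r / k = m at this
      rw [this]; module
  have hKk : K - k ≠ 0 := by linarith
  have ex : x = f k + (-k / (K - k)) • (f K - f k) := by
    have : k + -k / (K - k) * (K - k) = 0 := by field_simp; ring
    generalize -k / (K - k) = m at this
    calc x = x + (0:ℝ) • (y - x) := by simp
      _ = _ := by rw [← this]; simp only [hf]; module
  have ey : y = f k + ((1 - k) / (K - k)) • (f K - f k) := by
    have : k + (1 - k) / (K - k) * (K - k) = 1 := by field_simp; ring
    generalize (1 - k) / (K - k) = m at this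
    calc y = x + (1:ℝ) • (y - x) := by simp
      _ = _ := by rw [← this]; simp only [hf]; module
  obtain ⟨s, hs⟩ := exists_sigmoid (k := -k / (K - k)) (div_pos (by linarith) (by linarith))
    ((div_lt_one (by linarith)).2 (by linarith))
  obtain ⟨t, ht⟩ := exists_sigmoid (k := (1 - k) / (K - k)) (div_pos (by linarith) (by linarith))
    ((div_lt_one (by linarith)).2 (by linarith))
  refine ⟨f k, f K, s, t, hch, ?_, by rwa [geo, hs], by rwa [geo, ht]⟩
  rw [← Real.sigmoid_lt_iff, hs, ht]
  exact div_lt_div_of_pos_right (by linarith) (by linarith)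

lemma tendsto_geo_atTop (a b : Euc n) :
    Filter.Tendsto (geo a b) Filter.atTop (nhds b) := by
  have := (Real.tendsto_sigmoid_atTop.smul_const (b - a)).const_add a
  rwa [one_smul, add_sub_cancel] at this

lemma tendsto_geo_atBot (a b : Euc n) :
    Filter.Tendsto (geo a b) Filter.atBot (nhds a) := by
  have := (Real.tendsto_sigmoid_atBot.smul_const (b - a)).const_add a
  rwa [zero_smul, add_zero] at this

lemma isLineFromTo_iff (D : CvxDom Ω) {L : Set (Euc n)} :
    IsLineFromTo Ω L a b ↔ IsChord Ω a b ∧ L = range (geo a b) := by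
  constructor
  · rintro ⟨⟨⟨x, hx⟩, p, d, hd, hL⟩, hab, ha, hb, haL, hbL⟩
    have hcl : IsClosed {x | ∃ t : ℝ, x = p + t • d} := by
      have : {x | ∃ t : ℝ, x = p + t • d} =
          (AffineSubspace.mk' p (Submodule.span ℝ {d}) : Set (Euc n)) := by
        ext q
        simp only [mem_ofPred_eq, SetLike.mem_coe, AffineSubspace.mem_mk', vsub_eq_sub,
          Submodule.mem_span_singleton]
        constructor
        · rintro ⟨t, rfl⟩; exact ⟨t, by simp⟩
        · rintro ⟨t, ht⟩; exact ⟨t, by rw [ht]; simp⟩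
      rw [this]
      exact AffineSubspace.closed_of_finiteDimensional _
    have hsub : closure L ⊆ {x | ∃ t : ℝ, x = p + t • d} := by
      apply closure_minimal _ hcl
      rw [hL]; exact inter_subset_left
    obtain ⟨ta, rfl⟩ := hsub haL
    obtain ⟨tb, rfl⟩ := hsub hbL
    have hne : tb - ta ≠ 0 := by
      intro h; apply hab; rw [show tb = ta by linarith]
    -- the two descriptions of the straight line agree
    have key : ∀ t : ℝ, p + t • d = (p + ta • d) + ((t - ta) / (tb - ta)) •
        ((p + tb • d) - (p + ta • d)) := by
      intro t
      have : t = ta + (t - ta) / (tb - ta) * (tb - ta) := by field_simp; ring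
      generalize (t - ta) / (tb - ta) = m at this
      rw [this]; module
    rw [hL] at hx
    obtain ⟨⟨t, rfl⟩, hxΩ⟩ := hx
    rw [key] at hxΩ
    set a := p + ta • d
    set b := p + tb • d
    generalize (t - ta) / (tb - ta) = q at hxΩ
    have hac := mem_closure_of_frontier ha
    have hbc := mem_closure_of_frontier hb
    have q0 : 0 < q := by
      by_contra h
      push Not at h
      have h2 : 0 < 1 - q := by linarith
      have := D.mid hxΩ hbc (k := -q / (1 - q)) (div_nonneg (by linarith) (by linarith))
        ((div_lt_one h2).2 (by linarith))
      apply D.not_mem ha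
      convert this using 1
      have : q + -q / (1 - q) * (1 - q) = 0 := by field_simp; ring
      generalize -q / (1 - q) = m at this
      calc a = a + (0:ℝ) • (b - a) := by simp
        _ = _ := by rw [← this]; module
    have q1 : q < 1 := by
      by_contra h
      push Not at h
      have := D.mid hxΩ hac (k := (q - 1) / q) (div_nonneg (by linarith) (by linarith))
        ((div_lt_one q0).2 (by linarith))
      apply D.not_mem hb
      convert this using 1
      have : q + (q - 1) / q * (- q) = 1 := by field_simp; ring
      generalize (q - 1) / q = m at this
      calc b = a + (1:ℝ) • (b - a) := by simp
        _ = _ := by rw [← this]; module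
    have hch : IsChord Ω a b := by
      refine ⟨ha, hb, fun k h0 h1 => ?_⟩
      rcases le_total k q with h | h
      · have := D.mid hxΩ hac (k := (q - k) / q) (div_nonneg (by linarith) (by linarith))
          ((div_lt_one q0).2 (by linarith))
        convert this using 1
        have : q + (q - k) / q * (- q) = k := by field_simp; ring
        generalize (q - k) / q = m at this
        rw [← this]; module
      · have h2 : 0 < 1 - q := by linarith
        have := D.mid hxΩ hbc (k := (k - q) / (1 - q)) (div_nonneg (by linarith) (by linarith))
          ((div_lt_one h2).2 (by linarith))
        convert this using 1
        have : q + (k - q) / (1 - q) * (1 - q) = k := by field_simp; ring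
        generalize (k - q) / (1 - q) = m at this
        rw [← this]; module
    refine ⟨hch, ?_⟩
    rw [hL]
    ext z
    constructor
    · rintro ⟨⟨r, rfl⟩, hz⟩
      rw [key] at hz ⊢
      exact hch.exists_geo D hz
    · rintro ⟨r, rfl⟩
      refine ⟨⟨ta + Real.sigmoid r * (tb - ta), ?_⟩, hch.geo_mem r⟩
      simp only [geo, a, b]; module
  · rintro ⟨h, rfl⟩
    refine ⟨⟨range_nonempty _, a, b - a, sub_ne_zero.2 (h.ne D).symm, ?_⟩, h.ne D, h.1, h.2.1,
      mem_closure_of_tendsto (tendsto_geo_atBot a b) (Filter.Eventually.of_forall mem_range_self),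
      mem_closure_of_tendsto (tendsto_geo_atTop a b) (Filter.Eventually.of_forall mem_range_self)⟩
    ext z
    constructor
    · rintro ⟨t, rfl⟩; exact ⟨⟨_, rfl⟩, h.geo_mem t⟩
    · rintro ⟨⟨t, rfl⟩, hz⟩; exact h.exists_geo D hz

/-! ### The Hilbert distance along chords -/

lemma sigmoid_ratio (s t : ℝ) :
    Real.sigmoid t / Real.sigmoid s * ((1 - Real.sigmoid s) / (1 - Real.sigmoid t))
      = Real.exp (t - s) := by
  have h1 : (1 - Real.sigmoid s) = Real.sigmoid s * Real.exp (-s) := by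
    rw [Real.sigmoid_mul_rexp_neg, Real.sigmoid_neg]
  have h2 : (1 - Real.sigmoid t) = Real.sigmoid t * Real.exp (-t) := by
    rw [Real.sigmoid_mul_rexp_neg, Real.sigmoid_neg]
  have p1 := (Real.sigmoid_pos s).ne'
  have p2 := (Real.sigmoid_pos t).ne'
  have p3 := (Real.exp_pos (-t)).ne'
  rw [h1, h2]
  have : Real.exp (t - s) = Real.exp (-s) / Real.exp (-t) := by
    rw [← Real.exp_sub]; congr 1; ring
  rw [this]
  field_simp

lemma dist_left_geo (a b : Euc n) (t : ℝ) : dist a (geo a b t) = Real.sigmoid t * ‖b - a‖ := by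
  rw [geo, dist_self_add_right, norm_smul, Real.norm_of_nonneg (Real.sigmoid_nonneg t)]

lemma dist_right_geo (a b : Euc n) (t : ℝ) :
    dist b (geo a b t) = (1 - Real.sigmoid t) * ‖b - a‖ := by
  rw [← geo_symm, dist_left_geo, Real.sigmoid_neg, norm_sub_rev]

lemma IsChord.eq_end_of_collinear (D : CvxDom Ω) (h : IsChord Ω a b) {s t : ℝ} (hst : s < t)
    (hc : c ∈ frontier Ω) (hcol : Collinear ℝ ({c, geo a b s, geo a b t} : Set (Euc n))) :
    c = a ∨ c = b := by
  have hne := (Real.sigmoid_lt hst).ne'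
  rw [collinear_iff_of_mem (p₀ := geo a b s) (by simp)] at hcol
  obtain ⟨v, hv⟩ := hcol
  obtain ⟨r, hr⟩ := hv c (by simp)
  obtain ⟨q, hq⟩ := hv (geo a b t) (by simp)
  have hq' : (Real.sigmoid t - Real.sigmoid s) • (b - a) = q • v := by
    rw [vadd_eq_add] at hq
    have : geo a b t - geo a b s = q • v := by rw [hq]; simp
    rw [← this]; simp only [geo]; module
  have hne' : Real.sigmoid t - Real.sigmoid s ≠ 0 := sub_ne_zero.2 hne
  have hq0 : q ≠ 0 := by
    rintro rfl
    rw [zero_smul, smul_eq_zero] at hq'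
    rcases hq' with h' | h'
    · exact hne' h'
    · exact h.ne D (sub_eq_zero.1 h').symm
  have hv' : v = (q⁻¹ * (Real.sigmoid t - Real.sigmoid s)) • (b - a) := by
    rw [mul_smul, hq', smul_smul, inv_mul_cancel₀ hq0, one_smul]
  obtain ⟨k, hk⟩ : ∃ k : ℝ, c = a + k • (b - a) := by
    refine ⟨Real.sigmoid s + r * (q⁻¹ * (Real.sigmoid t - Real.sigmoid s)), ?_⟩
    rw [hr, hv', vadd_eq_add]; simp only [geo]; module
  have hcc := mem_closure_of_frontier hc
  have hcn := D.not_mem hc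
  rw [hk] at hcc hcn
  rcases (h.nonneg_of_mem D hcc).eq_or_lt with h0 | h0
  · left; rw [hk, ← h0]; simp
  rcases (h.le_one_of_mem D hcc).eq_or_lt with h1 | h1
  · right; rw [hk, h1]; simp
  exact absurd (h.2.2 k h0 h1) hcn

lemma hilbertDist_self (x : Euc n) : hilbertDist Ω x x = 0 := by
  rw [hilbertDist, dif_neg]
  rintro ⟨p, -, -, -, -, h, -⟩
  exact lt_irrefl _ h

lemma IsChord.dist_of_lt (D : CvxDom Ω) (h : IsChord Ω a b) {s t : ℝ} (hst : s < t) :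
    hilbertDist Ω (geo a b s) (geo a b t) = t - s := by
  have hn : 0 < ‖b - a‖ := norm_pos_iff.2 (sub_ne_zero.2 (h.ne D).symm)
  have hlt := Real.sigmoid_lt hst
  have hex : ∃ p : Euc n × Euc n, IsHilbertPair Ω (geo a b s) (geo a b t) p.1 p.2 := by
    have col : ∀ k : ℝ, Collinear ℝ ({a + k • (b - a), geo a b s, geo a b t} : Set (Euc n)) := by
      intro k
      refine (collinear_iff_exists_forall_eq_smul_vadd _).2 ⟨a, b - a, ?_⟩
      rintro p (rfl | rfl | rfl)
      · exact ⟨k, by simp [add_comm]⟩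
      · exact ⟨Real.sigmoid s, by simp [geo, add_comm]⟩
      · exact ⟨Real.sigmoid t, by simp [geo, add_comm]⟩
    refine ⟨(a, b), h.1, h.2.1, by simpa using col 0, by simpa using col 1, ?_, ?_⟩
    · simp only [dist_left_geo]
      exact mul_lt_mul_of_pos_right hlt hn
    · simp only [dist_right_geo]
      exact mul_lt_mul_of_pos_right (by linarith) hn
  rw [hilbertDist, dif_pos hex]
  obtain ⟨h1, h2, h3, h4, h5, h6⟩ := hex.choose_spec
  have e1 : hex.choose.1 = a := by
    rcases h.eq_end_of_collinear D hst h1 h3 with e | e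
    · exact e
    · exfalso
      rw [e, dist_right_geo, dist_right_geo] at h5
      have := lt_of_mul_lt_mul_right h5 hn.le
      linarith
  have e2 : hex.choose.2 = b := by
    rcases h.eq_end_of_collinear D hst h2 h4 with e | e
    · exfalso
      rw [e, dist_left_geo, dist_left_geo] at h6
      have := lt_of_mul_lt_mul_right h6 hn.le
      linarith
    · exact e
  rw [e1, e2, dist_left_geo, dist_left_geo, dist_right_geo, dist_right_geo,
    mul_div_mul_right _ _ hn.ne', mul_div_mul_right _ _ hn.ne', sigmoid_ratio, Real.log_exp]

lemma IsChord.dist_geo (D : CvxDom Ω) (h : IsChord Ω a b) (s t : ℝ) :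
    hilbertDist Ω (geo a b s) (geo a b t) = |s - t| := by
  rcases lt_trichotomy s t with hst | rfl | hst
  · rw [h.dist_of_lt D hst, abs_of_neg (by linarith)]; ring
  · rw [hilbertDist_self]; simp
  · rw [← geo_symm a b s, ← geo_symm a b t, h.symm.dist_of_lt D (by linarith),
      abs_of_pos (by linarith)]; ring

lemma hilbertDist_comm (D : CvxDom Ω) (hx : x ∈ Ω) (hy : y ∈ Ω) :
    hilbertDist Ω x y = hilbertDist Ω y x := by
  by_cases hxy : x = y
  · rw [hxy]
  obtain ⟨a, b, s, t, h, -, rfl, rfl⟩ := D.exists_chord hx hy hxy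
  rw [h.dist_geo D, h.dist_geo D, abs_sub_comm]

lemma hilbertDist_pos (D : CvxDom Ω) (hx : x ∈ Ω) (hy : y ∈ Ω) (hxy : x ≠ y) :
    0 < hilbertDist Ω x y := by
  obtain ⟨a, b, s, t, h, hst, rfl, rfl⟩ := D.exists_chord hx hy hxy
  rw [h.dist_of_lt D hst]; linarith

lemma hilbertDist_nonneg (D : CvxDom Ω) (hx : x ∈ Ω) (hy : y ∈ Ω) :
    0 ≤ hilbertDist Ω x y := by
  by_cases hxy : x = y
  · rw [hxy, hilbertDist_self]
  · exact (hilbertDist_pos D hx hy hxy).le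

/-- If the segment `[x, y]` can be prolonged inside the closure of `Ω` by the factor `e`
beyond `y` and by the factor `e'` beyond `x`, then `d(x, y)` is bounded in terms of
`e` and `e'` alone. -/
lemma hilbertDist_le (D : CvxDom Ω) (hx : x ∈ Ω) (hy : y ∈ Ω) {e e' : ℝ} (he : 0 < e)
    (he' : 0 < e') (h1 : y + e • (y - x) ∈ closure Ω) (h2 : x + e' • (x - y) ∈ closure Ω) :
    hilbertDist Ω x y ≤ Real.log ((1 + e) / e * ((1 + e') / e')) := by
  have hle : ∀ r : ℝ, 0 < r → 1 ≤ (1 + r) / r := fun r hr => by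
    rw [le_div_iff₀ hr]; linarith
  by_cases hxy : x = y
  · rw [hxy, hilbertDist_self]
    exact Real.log_nonneg (one_le_mul_of_one_le_of_one_le (hle e he) (hle e' he'))
  obtain ⟨a, b, s, t, h, hst, rfl, rfl⟩ := D.exists_chord hx hy hxy
  have k1 := h.le_one_of_mem D
    (k := Real.sigmoid t + e * (Real.sigmoid t - Real.sigmoid s))
    (by convert h1 using 1; simp only [geo]; module)
  have k2 := h.nonneg_of_mem D
    (k := Real.sigmoid s + e' * (Real.sigmoid s - Real.sigmoid t))
    (by convert h2 using 1; simp only [geo]; module)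
  have ps := Real.sigmoid_pos s
  have pt := Real.sigmoid_lt_one t
  rw [h.dist_of_lt D hst, Real.le_log_iff_exp_le (by positivity), ← sigmoid_ratio, mul_comm]
  gcongr ?_ * ?_
  · exact div_nonneg (Real.sigmoid_nonneg t) ps.le
  · rw [div_le_div_iff₀ (by linarith) he]; nlinarith
  · rw [div_le_div_iff₀ ps he']; nlinarith

/-- Converse of `hilbertDist_le`: a bound on the distance gives a uniform factor by which
segments can be prolonged. -/
lemma prolong_of_hilbertDist_le (D : CvxDom Ω) (hx : x ∈ Ω) (hy : y ∈ Ω) {C : ℝ}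
    (hC : hilbertDist Ω x y ≤ C) : y + Real.exp (-C) • (y - x) ∈ closure Ω := by
  by_cases hxy : x = y
  · subst hxy; simpa using subset_closure hx
  obtain ⟨a, b, s, t, h, hst, rfl, rfl⟩ := D.exists_chord hx hy hxy
  rw [h.dist_of_lt D hst] at hC
  have ps := Real.sigmoid_pos s
  have pt := Real.sigmoid_lt_one t
  have hlt := Real.sigmoid_lt hst
  have hm := h.mem_closure
    (k := Real.sigmoid t + Real.exp (-C) * (Real.sigmoid t - Real.sigmoid s))
    (add_nonneg (Real.sigmoid_nonneg t) (mul_nonneg (Real.exp_pos _).le (by linarith))) ?_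
  · convert hm using 1; simp only [geo]; module
  have hr := sigmoid_ratio s t
  have h1 : (1 - Real.sigmoid s) / (1 - Real.sigmoid t) ≤ Real.exp C := by
    calc _ ≤ Real.sigmoid t / Real.sigmoid s * ((1 - Real.sigmoid s) / (1 - Real.sigmoid t)) := by
          apply le_mul_of_one_le_left
          · exact div_nonneg (by linarith) (by linarith)
          · rw [le_div_iff₀ ps]; linarith
      _ ≤ _ := by rw [hr]; exact Real.exp_le_exp.2 hC
  rw [div_le_iff₀ (by linarith)] at h1
  have h2 : Real.exp (-C) * (1 - Real.sigmoid s) ≤ 1 - Real.sigmoid t := by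
    calc _ ≤ Real.exp (-C) * (Real.exp C * (1 - Real.sigmoid t)) := by gcongr
      _ = _ := by rw [← mul_assoc, ← Real.exp_add]; simp
  have := mul_le_mul_of_nonneg_left (show Real.sigmoid t - Real.sigmoid s ≤ 1 - Real.sigmoid s by
    linarith) (Real.exp_pos (-C)).le
  linarith

/-! ### Supporting functionals and the equality case of the triangle inequality -/

lemma CvxDom.exists_support (D : CvxDom Ω) (ha : a ∉ Ω) :
    ∃ g : Euc n →ᵃ[ℝ] ℝ, (∀ p ∈ Ω, 0 < g p) ∧ g a = 0 := by
  obtain ⟨f, hf⟩ := geometric_hahn_banach_open_point D.cv D.op ha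
  refine ⟨AffineMap.const ℝ _ (f a) - (f : Euc n →ₗ[ℝ] ℝ).toAffineMap, fun p hp => ?_, ?_⟩
  · simpa using hf p hp
  · simp

lemma affine_nonneg_closure {g : Euc n →ᵃ[ℝ] ℝ} (hg : ∀ p ∈ Ω, 0 < g p) (hx : x ∈ closure Ω) :
    0 ≤ g x := by
  have : IsClosed {p | 0 ≤ g p} :=
    isClosed_le continuous_const (AffineMap.continuous_of_finiteDimensional g)
  exact closure_minimal (fun p hp => (hg p hp).le) this hx

lemma affine_apply (g : Euc n →ᵃ[ℝ] ℝ) (x y : Euc n) (k : ℝ) :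
    g (x + k • (y - x)) = (1 - k) * g x + k * g y := by
  have := g.apply_lineMap x y k
  rw [AffineMap.lineMap_apply, AffineMap.lineMap_apply] at this
  simp only [vsub_eq_sub, vadd_eq_add, smul_eq_mul] at this
  rw [add_comm, this]; ring

/-- The logarithmic variation from `x` to `y` of the quotient of two affine functions
`g, h`. When both are positive on `Ω` it is a lower bound for the Hilbert distance. -/
def logVar (g h : Euc n →ᵃ[ℝ] ℝ) (x y : Euc n) : ℝ :=
  (Real.log (g x) - Real.log (g y)) + (Real.log (h y) - Real.log (h x))

lemma logVar_add (g h : Euc n →ᵃ[ℝ] ℝ) (x y z : Euc n) :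
    logVar g h x z + logVar g h z y = logVar g h x y := by
  simp only [logVar]; ring

lemma log_sub_le {g : Euc n →ᵃ[ℝ] ℝ} (hg : ∀ p ∈ Ω, 0 < g p) (h : IsChord Ω a b)
    {s t : ℝ} (hst : s < t) :
    Real.log (g (geo a b s)) - Real.log (g (geo a b t)) ≤
      Real.log ((1 - Real.sigmoid s) / (1 - Real.sigmoid t)) ∧
    (Real.log (g (geo a b s)) - Real.log (g (geo a b t)) =
      Real.log ((1 - Real.sigmoid s) / (1 - Real.sigmoid t)) ↔ g b = 0) := by
  have gs := hg _ (h.geo_mem s)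
  have gt := hg _ (h.geo_mem t)
  have B := affine_nonneg_closure hg (mem_closure_of_frontier h.2.1)
  have hlt := Real.sigmoid_lt hst
  have ps := Real.sigmoid_lt_one s
  have pt := Real.sigmoid_lt_one t
  rw [← Real.log_div gs.ne' gt.ne']
  have es : g (geo a b s) = (1 - Real.sigmoid s) * g a + Real.sigmoid s * g b :=
    affine_apply g a b _
  have et : g (geo a b t) = (1 - Real.sigmoid t) * g a + Real.sigmoid t * g b :=
    affine_apply g a b _
  have p1 : 0 < g (geo a b s) / g (geo a b t) := by positivity
  have p2 : 0 < (1 - Real.sigmoid s) / (1 - Real.sigmoid t) :=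
    div_pos (by linarith) (by linarith)
  constructor
  · apply Real.log_le_log p1
    rw [div_le_div_iff₀ gt (by linarith), es, et]
    nlinarith
  · rw [Real.log_injOn_pos.eq_iff p1 p2, div_eq_div_iff gt.ne' (by linarith), es, et]
    constructor
    · intro e
      have : (Real.sigmoid t - Real.sigmoid s) * g b = 0 := by linear_combination -e
      rcases mul_eq_zero.1 this with h' | h'
      · linarith
      · exact h'
    · intro e; rw [e]; ring

lemma logVar_le {g k : Euc n →ᵃ[ℝ] ℝ} (D : CvxDom Ω) (hg : ∀ p ∈ Ω, 0 < g p)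
    (hk : ∀ p ∈ Ω, 0 < k p) (h : IsChord Ω a b) {s t : ℝ} (hst : s < t) :
    logVar g k (geo a b s) (geo a b t) ≤ hilbertDist Ω (geo a b s) (geo a b t) ∧
    (logVar g k (geo a b s) (geo a b t) = hilbertDist Ω (geo a b s) (geo a b t) ↔
      g b = 0 ∧ k a = 0) := by
  obtain ⟨g1, g2⟩ := log_sub_le hg h hst
  obtain ⟨k1, k2⟩ := log_sub_le hk h.symm (neg_lt_neg hst)
  rw [geo_symm, geo_symm] at k1 k2
  have p1 := Real.sigmoid_pos s
  have p2 := Real.sigmoid_pos t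
  have p3 := Real.sigmoid_lt_one s
  have p4 := Real.sigmoid_lt_one t
  have e : hilbertDist Ω (geo a b s) (geo a b t) =
      Real.log ((1 - Real.sigmoid s) / (1 - Real.sigmoid t)) +
        Real.log ((1 - Real.sigmoid (-t)) / (1 - Real.sigmoid (-s))) := by
    rw [h.dist_of_lt D hst, Real.sigmoid_neg, Real.sigmoid_neg, sub_sub_cancel, sub_sub_cancel,
      ← Real.log_mul, mul_comm, sigmoid_ratio, Real.log_exp]
    · exact (div_pos (by linarith) (by linarith)).ne'
    · positivity
  rw [← g2, ← k2, e, logVar]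
  refine ⟨by linarith, fun h => ⟨by linarith, by linarith⟩, fun h => by linarith⟩

lemma logVar_le' {g k : Euc n →ᵃ[ℝ] ℝ} (D : CvxDom Ω) (hg : ∀ p ∈ Ω, 0 < g p)
    (hk : ∀ p ∈ Ω, 0 < k p) (hx : x ∈ Ω) (hy : y ∈ Ω) :
    logVar g k x y ≤ hilbertDist Ω x y := by
  by_cases hxy : x = y
  · subst hxy; simp [logVar, hilbertDist_self]
  obtain ⟨a, b, s, t, h, hst, rfl, rfl⟩ := D.exists_chord hx hy hxy
  exact (logVar_le D hg hk h hst).1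

lemma hilbertDist_triangle (D : CvxDom Ω) (hx : x ∈ Ω) (hy : y ∈ Ω) (hz : z ∈ Ω) :
    hilbertDist Ω x y ≤ hilbertDist Ω x z + hilbertDist Ω z y := by
  by_cases hxy : x = y
  · subst hxy
    rw [hilbertDist_self]
    exact add_nonneg (hilbertDist_nonneg D hx hz) (hilbertDist_nonneg D hz hx)
  obtain ⟨a, b, s, t, h, hst, rfl, rfl⟩ := D.exists_chord hx hy hxy
  obtain ⟨g, hg, gb⟩ := D.exists_support (D.not_mem h.2.1)
  obtain ⟨k, hk, ka⟩ := D.exists_support (D.not_mem h.1)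
  rw [← (logVar_le D hg hk h hst).2.2 ⟨gb, ka⟩, ← logVar_add g k _ _ z]
  exact add_le_add (logVar_le' D hg hk hx hz) (logVar_le' D hg hk hz hy)

/-! ### Relative interiors of faces -/

lemma mem_relint_iff {F : Set (Euc n)} : x ∈ intrinsicInterior ℝ F ↔
    x ∈ F ∧ ∃ ε > 0, ∀ v ∈ vectorSpan ℝ F, ‖v‖ < ε → x + v ∈ F := by
  rw [mem_intrinsicInterior]
  constructor
  · rintro ⟨y, hy, rfl⟩
    have hyF : y ∈ Subtype.val ⁻¹' F := interior_subset hy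
    refine ⟨hyF, ?_⟩
    rw [mem_interior_iff_mem_nhds, Metric.mem_nhds_iff] at hy
    obtain ⟨ε, hε, hb⟩ := hy
    refine ⟨ε, hε, fun v hv hlt => ?_⟩
    have hmem : (y : Euc n) + v ∈ affineSpan ℝ F := by
      have := AffineSubspace.vadd_mem_of_mem_direction
        (s := affineSpan ℝ F) (v := v) (by rwa [direction_affineSpan]) y.2
      rwa [vadd_eq_add, add_comm] at this
    have : (⟨(y : Euc n) + v, hmem⟩ : affineSpan ℝ F) ∈ Metric.ball y ε := by
      rw [Metric.mem_ball, Subtype.dist_eq]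
      simpa using hlt
    exact hb this
  · rintro ⟨hx, ε, hε, h⟩
    refine ⟨⟨x, subset_affineSpan ℝ F hx⟩, ?_, rfl⟩
    rw [mem_interior_iff_mem_nhds, Metric.mem_nhds_iff]
    refine ⟨ε, hε, fun y hy => ?_⟩
    rw [Metric.mem_ball, Subtype.dist_eq, dist_eq_norm] at hy
    have := h ((y : Euc n) - x) ?_ hy
    · simpa using this
    · have := AffineSubspace.vsub_mem_direction y.2 (subset_affineSpan ℝ F hx)
      rwa [direction_affineSpan] at this

lemma sub_mem_vectorSpan {F : Set (Euc n)} (hx : x ∈ F) (hy : y ∈ F) :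
    x - y ∈ vectorSpan ℝ F := vsub_mem_vectorSpan ℝ hx hy

lemma exists_small (p q : Euc n) (r : ℝ) {ε ε' : ℝ} (hε : 0 < ε) (hε' : 0 < ε') :
    ∃ δ > 0, ‖δ • p‖ < ε ∧ ‖δ • q‖ < ε' ∧ |δ * r| < 1 / 12 := by
  have h1 : ∀ᶠ δ : ℝ in nhdsWithin 0 (Ioi 0), ‖δ • p‖ < ε :=
    nhdsWithin_le_nhds (((continuous_id.smul continuous_const).norm.tendsto' (0 : ℝ) 0
      (by simp)).eventually_lt_const hε)
  have h2 : ∀ᶠ δ : ℝ in nhdsWithin 0 (Ioi 0), ‖δ • q‖ < ε' :=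
    nhdsWithin_le_nhds (((continuous_id.smul continuous_const).norm.tendsto' (0 : ℝ) 0
      (by simp)).eventually_lt_const hε')
  have h3 : ∀ᶠ δ : ℝ in nhdsWithin 0 (Ioi 0), |δ * r| < 1 / 12 :=
    nhdsWithin_le_nhds (((continuous_id.mul continuous_const).abs.tendsto' (0 : ℝ) 0
      (by simp)).eventually_lt_const (by norm_num))
  obtain ⟨δ, h1, h2, h3, h4⟩ := (h1.and (h2.and (h3.and self_mem_nhdsWithin))).exists
  exact ⟨δ, h4, h1, h2, h3⟩

lemma relint_prolong {F : Set (Euc n)} (hx : x ∈ intrinsicInterior ℝ F) {v : Euc n}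
    (hv : v ∈ vectorSpan ℝ F) : ∃ ε > 0, ∀ e : ℝ, |e| ≤ ε → x + e • v ∈ F := by
  obtain ⟨-, ε, hε, h⟩ := mem_relint_iff.1 hx
  obtain ⟨δ, hδ, h1, -, -⟩ := exists_small v v 0 hε hε
  refine ⟨δ, hδ, fun e he => h _ (Submodule.smul_mem _ _ hv) (lt_of_le_of_lt ?_ h1)⟩
  rw [norm_smul, norm_smul, Real.norm_eq_abs, Real.norm_of_nonneg hδ.le]
  gcongr

lemma relint_mid {F : Set (Euc n)} (hF : Convex ℝ F) (hx : x ∈ intrinsicInterior ℝ F)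
    (hy : y ∈ F) {k : ℝ} (h0 : 0 ≤ k) (h1 : k < 1) :
    x + k • (y - x) ∈ intrinsicInterior ℝ F := by
  obtain ⟨hxF, ε, hε, h⟩ := mem_relint_iff.1 hx
  have key : ∀ v ∈ vectorSpan ℝ F, ‖v‖ < (1 - k) * ε → x + k • (y - x) + v ∈ F := by
    intro v hv hlt
    have hk : 0 < 1 - k := by linarith
    have hm := h ((1 - k)⁻¹ • v) (Submodule.smul_mem _ _ hv) (by
      rw [norm_smul, Real.norm_of_nonneg (by positivity), inv_mul_lt_iff₀ hk]; exact hlt)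
    have := hF hm hy hk.le h0 (by ring)
    convert this using 1
    rw [smul_add, smul_smul, mul_inv_cancel₀ hk.ne']; module
  refine mem_relint_iff.2 ⟨?_, (1 - k) * ε, mul_pos (by linarith) hε, key⟩
  have := key 0 (Submodule.zero_mem _) (by simpa using mul_pos (by linarith) hε)
  simpa using this

/-- The direction of a chord is transverse to the face at its end. -/
lemma IsChord.sub_not_mem (D : CvxDom Ω) (h : IsChord Ω a b) {F : Set (Euc n)}
    (hF : F ⊆ closure Ω) (hb : b ∈ intrinsicInterior ℝ F) : b - a ∉ vectorSpan ℝ F := by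
  intro hv
  obtain ⟨ε, hε, he⟩ := relint_prolong hb hv
  have hm := hF (he ε (abs_of_pos hε).le)
  have := h.le_one_of_mem D (k := 1 + ε) (by convert hm using 1; module)
  linarith

/-! ### Rigidity of a line in terms of the faces at its ends -/

/-- The affine spans of `F₁` (through `a`) and `F₂` (through `b`) contain nontrivial
directions that are coplanar with the line `ab`. -/
def CoplanarDirs (F₁ F₂ : Set (Euc n)) (a b : Euc n) : Prop :=
  ∃ (u : Euc n) (q : ℝ), u ∈ vectorSpan ℝ F₁ ∧ u ≠ 0 ∧ u + q • (b - a) ∈ vectorSpan ℝ F₂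

lemma CoplanarDirs.shift {F₁ F₂ : Set (Euc n)} (h : CoplanarDirs F₁ F₂ a b) (ha : a ∈ F₁)
    (hc : c ∈ F₁) (hb : b ∈ F₂) (hd : d ∈ F₂) (hcd : d - c ∉ vectorSpan ℝ F₂) :
    CoplanarDirs F₁ F₂ c d := by
  obtain ⟨u, q, hu, hu0, hv⟩ := h
  have hv2 : (u + q • (c - a)) + q • (d - c) ∈ vectorSpan ℝ F₂ := by
    have := Submodule.add_mem _ hv (Submodule.smul_mem _ q (sub_mem_vectorSpan hd hb))
    convert this using 1; module
  refine ⟨u + q • (c - a), q, Submodule.add_mem _ hu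
    (Submodule.smul_mem _ q (sub_mem_vectorSpan hc ha)), fun h0 => ?_, hv2⟩
  rw [h0, zero_add] at hv2
  have hq : q ≠ 0 := by
    rintro rfl; simp at h0; exact hu0 h0
  exact hcd ((Submodule.smul_mem_iff _ hq).1 hv2)

lemma IsChord.exists_end (a b : Euc n) {s t : ℝ} (hst : s < t) :
    ∃ r : ℝ, 1 < r ∧ b = geo a b s + r • (geo a b t - geo a b s) := by
  have hlt := Real.sigmoid_lt hst
  have pt := Real.sigmoid_lt_one t
  have h0 : 0 < Real.sigmoid t - Real.sigmoid s := by linarith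
  refine ⟨(1 - Real.sigmoid s) / (Real.sigmoid t - Real.sigmoid s), ?_, ?_⟩
  · rw [lt_div_iff₀ h0]; linarith
  · have := div_mul_cancel₀ (1 - Real.sigmoid s) h0.ne'
    generalize (1 - Real.sigmoid s) / (Real.sigmoid t - Real.sigmoid s) = r at this
    have e : Real.sigmoid s + r * (Real.sigmoid t - Real.sigmoid s) = 1 := by linarith
    calc b = a + (1:ℝ) • (b - a) := by simp
      _ = _ := by rw [← e]; simp only [geo]; module

/-- If the rays `x → y`, `x → z` and `z → y` leave `Ω` through one supporting hyperplane
`g = 0`, then the exit point of `x → y` lies strictly between the other two, so its face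
contains a direction of the plane `xyz` not parallel to `y - x`. -/
lemma exists_dir_of_exits {F : Set (Euc n)} (hF : IsFace (closure Ω) F)
    {g : Euc n →ᵃ[ℝ] ℝ} {s₁ s₂ s₃ : ℝ} (h1 : 1 < s₁) (h2 : 1 < s₂)
    (hx : 0 < g x) (hb : x + s₃ • (y - x) ∈ F) (gb : g (x + s₃ • (y - x)) = 0)
    (hp : x + s₁ • (z - x) ∈ closure Ω) (gp : g (x + s₁ • (z - x)) = 0)
    (hq : z + s₂ • (y - z) ∈ closure Ω) (gq : g (z + s₂ • (y - z)) = 0) :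
    ∃ P P' : ℝ, 0 < P ∧ P • (z - x) - P' • (y - x) ∈ vectorSpan ℝ F := by
  have hN : 0 < s₁ + s₂ - 1 := by linarith
  set p := x + s₁ • (z - x) with hpd
  set q := z + s₂ • (y - z) with hqd
  have el : (s₁ + s₂ - 1)⁻¹ * (s₁ + s₂ - 1) = 1 := inv_mul_cancel₀ hN.ne'
  set N := (s₁ + s₂ - 1)⁻¹ with hNd
  have hNp : 0 < N := inv_pos.2 hN
  have e : (N * (s₂ - 1)) • p + (N * s₁) • q = x + (N * (s₁ * s₂)) • (y - x) := by
    have hz : (N * (s₂ - 1)) • p + (N * s₁) • q =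
      (N * (s₁ + s₂ - 1)) • x + (N * (s₁ * s₂)) • (y - x) := by
      rw [hpd, hqd]; module
    rw [hz, el, one_smul]
  have eq2 : (N * (s₂ - 1)) • p + (N * s₁) • q = p + (N * s₁) • (q - p) := by
    have : N * (s₂ - 1) = 1 - N * s₁ := by linarith
    rw [this]; module
  have g0 : g (x + (N * (s₁ * s₂)) • (y - x)) = 0 := by
    rw [← e, eq2, affine_apply, gp, gq]; ring
  have hk : N * (s₁ * s₂) = s₃ := by
    rw [affine_apply] at g0 gb
    have : (N * (s₁ * s₂) - s₃) * (g y - g x) = 0 := by linear_combination g0 - gb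
    rcases mul_eq_zero.1 this with h | h
    · linarith
    · exfalso
      rw [show g y = g x by linarith] at gb
      linarith
  have hseg : x + s₃ • (y - x) ∈ openSegment ℝ p q :=
    ⟨N * (s₂ - 1), N * s₁, mul_pos hNp (by linarith), mul_pos hNp (by linarith),
      by linarith, by rw [e, hk]⟩
  have hpF := hF.2.2 hp hq hb hseg
  have hqF := hF.2.2 hq hp hb (by rwa [openSegment_symm])
  refine ⟨s₁ + s₂ - 1, s₂, hN, ?_⟩
  convert sub_mem_vectorSpan hpF hqF using 1
  rw [hpd, hqd]; module

/-- A point off the line `ab` on a geodesic between two points of this line forces coplanar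
directions in the faces at `a` and `b`. -/
lemma coplanarDirs_of_geodesic (D : CvxDom Ω) (h : IsChord Ω a b) {F₁ F₂ : Set (Euc n)}
    (hF₁ : IsFace (closure Ω) F₁) (hF₂ : IsFace (closure Ω) F₂) (ha : a ∈ F₁) (hb : b ∈ F₂)
    {s t : ℝ} (hst : s < t) (hz : z ∈ Ω) (hzn : z ∉ segment ℝ (geo a b s) (geo a b t))
    (heq : hilbertDist Ω (geo a b s) z + hilbertDist Ω z (geo a b t) =
      hilbertDist Ω (geo a b s) (geo a b t)) : CoplanarDirs F₁ F₂ a b := by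
  obtain ⟨r₁, hr₁, eb⟩ := IsChord.exists_end a b hst
  obtain ⟨r₂, hr₂, ea⟩ := IsChord.exists_end b a (neg_lt_neg hst)
  rw [geo_symm, geo_symm] at ea
  obtain ⟨g, hg, gb⟩ := D.exists_support (D.not_mem h.2.1)
  obtain ⟨k, hk, ka⟩ := D.exists_support (D.not_mem h.1)
  have hx := h.geo_mem s
  have hy := h.geo_mem t
  have hxy : hilbertDist Ω (geo a b s) (geo a b t) = logVar g k (geo a b s) (geo a b t) :=
    ((logVar_le D hg hk h hst).2.2 ⟨gb, ka⟩).symm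
  have hzline : ∀ m : ℝ, z ≠ geo a b s + m • (geo a b t - geo a b s) := by
    intro m hm
    obtain ⟨u, hu⟩ := h.exists_geo D
      (k := Real.sigmoid s + m * (Real.sigmoid t - Real.sigmoid s)) (by
        convert hz using 1; rw [hm]; simp only [geo]; module)
    have hu' : z = geo a b u := by rw [hu, hm]; simp only [geo]; module
    apply hzn
    rw [hu', h.dist_geo D, h.dist_geo D, h.dist_geo D] at heq
    have hst' : |s - t| = t - s := by rw [abs_of_neg (by linarith)]; ring
    rw [hu']
    apply geo_mem_segment
    · by_contra hlt
      push Not at hlt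
      rw [hst', abs_of_pos (by linarith), abs_of_neg (by linarith)] at heq
      linarith
    · by_contra hlt
      push Not at hlt
      rw [hst', abs_of_neg (by linarith), abs_of_pos (by linarith)] at heq
      linarith
  generalize hxd : geo a b s = x at *
  generalize hyd : geo a b t = y at *
  have hxz : x ≠ z := fun e => hzline 0 (by simp [e])
  have hzy : z ≠ y := fun e => hzline 1 (by simp [e])
  have v1 := logVar_le' D hg hk hx hz
  have v2 := logVar_le' D hg hk hz hy
  have v3 := logVar_add g k x y z
  have w1 : logVar g k x z = hilbertDist Ω x z := by linarith
  have w2 : logVar g k z y = hilbertDist Ω z y := by linarith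
  -- all exit points lie on the supporting hyperplanes `g = 0` and `k = 0`
  obtain ⟨a₁, b₁, s₁, t₁, c₁, l₁, rfl, rfl⟩ := D.exists_chord hx hz hxz
  obtain ⟨gb₁, ka₁⟩ := (logVar_le D hg hk c₁ l₁).2.1 w1
  obtain ⟨a₂, b₂, s₂, t₂, c₂, l₂, hz₂, rfl⟩ := D.exists_chord hz hy hzy
  rw [hz₂] at w2
  obtain ⟨gb₂, ka₂⟩ := (logVar_le D hg hk c₂ l₂).2.1 w2
  obtain ⟨p₁, hp₁, eb₁⟩ := IsChord.exists_end a₁ b₁ l₁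
  obtain ⟨q₁, hq₁, ea₁⟩ := IsChord.exists_end b₁ a₁ (neg_lt_neg l₁)
  obtain ⟨p₂, hp₂, eb₂⟩ := IsChord.exists_end a₂ b₂ l₂
  obtain ⟨q₂, hq₂, ea₂⟩ := IsChord.exists_end b₂ a₂ (neg_lt_neg l₂)
  rw [geo_symm, geo_symm] at ea₁ ea₂
  rw [← hz₂] at eb₂ ea₂
  generalize geo a₁ b₁ s₁ = x at *
  generalize geo a₁ b₁ t₁ = z at *
  generalize geo a₂ b₂ t₂ = y at *
  obtain ⟨Q, Q', hQ, hv⟩ := exists_dir_of_exits (z := z) hF₂ hp₁ hp₂ (hg x hx) (eb ▸ hb) (eb ▸ gb)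
    (eb₁ ▸ mem_closure_of_frontier c₁.2.1) (eb₁ ▸ gb₁)
    (eb₂ ▸ mem_closure_of_frontier c₂.2.1) (eb₂ ▸ gb₂)
  obtain ⟨P, P', hP, hu⟩ := exists_dir_of_exits (z := z) hF₁ hq₂ hq₁ (hk y hy) (ea ▸ ha) (ea ▸ ka)
    (ea₂ ▸ mem_closure_of_frontier c₂.1) (ea₂ ▸ ka₂)
    (ea₁ ▸ mem_closure_of_frontier c₁.1) (ea₁ ▸ ka₁)
  obtain ⟨m, hm⟩ : ∃ m : ℝ, y - x = m • (b - a) := by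
    refine ⟨Real.sigmoid t - Real.sigmoid s, ?_⟩
    rw [← hxd, ← hyd]; simp only [geo]; module
  refine ⟨Q • (P • (z - y) - P' • (x - y)), (Q * (P - P') - P * Q') * m,
    Submodule.smul_mem _ _ hu, ?_, ?_⟩
  · intro h0
    have h1 : P • (z - y) = P' • (x - y) := by
      rcases smul_eq_zero.1 h0 with h' | h'
      · exact absurd h' hQ.ne'
      · exact sub_eq_zero.1 h'
    have h2 : z - y = (P⁻¹ * P') • (x - y) := by
      rw [mul_smul, ← h1, smul_smul, inv_mul_cancel₀ hP.ne', one_smul]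
    apply hzline (1 - P⁻¹ * P')
    rw [eq_add_of_sub_eq h2]; module
  · rw [mul_smul, ← hm]
    convert Submodule.smul_mem _ P hv using 1
    module

/-- Coplanar directions in the faces at `a` and `b` give a geodesic between the two points
dividing `[a, b]` in three, passing through a point `z` slightly off the line. -/
lemma not_rigid_of_coplanarDirs (D : CvxDom Ω) (h : IsChord Ω a b) {F₁ F₂ : Set (Euc n)}
    (hF₁ : F₁ ⊆ closure Ω) (hF₂ : F₂ ⊆ closure Ω) (ha : a ∈ intrinsicInterior ℝ F₁)
    (hb : b ∈ intrinsicInterior ℝ F₂) (hc : CoplanarDirs F₁ F₂ a b) :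
    ¬ IsRigidSet Ω (range (geo a b)) := by
  obtain ⟨u, q, hu, hu0, hv⟩ := hc
  obtain ⟨-, ε₁, hε₁, h₁⟩ := mem_relint_iff.1 ha
  obtain ⟨-, ε₂, hε₂, h₂⟩ := mem_relint_iff.1 hb
  obtain ⟨δ, hδ, d1, d2, d3⟩ := exists_small ((8:ℝ) • u) ((8:ℝ) • (u + q • (b - a))) q hε₁ hε₂
  obtain ⟨l1, l2⟩ := abs_lt.1 d3
  set κ := δ * q with hκ
  have m1 : ∀ j : ℝ, |j| ≤ 8 → a + (j * δ) • u ∈ closure Ω := by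
    intro j hj
    refine hF₁ (h₁ _ (Submodule.smul_mem _ _ hu) (lt_of_le_of_lt ?_ d1))
    rw [smul_smul, norm_smul, norm_smul]
    gcongr
    rw [Real.norm_eq_abs, Real.norm_eq_abs, abs_mul, abs_mul, mul_comm,
      abs_of_pos (show (0:ℝ) < 8 by norm_num)]
    gcongr
  have m2 : ∀ j : ℝ, |j| ≤ 8 → b + (j * δ) • (u + q • (b - a)) ∈ closure Ω := by
    intro j hj
    refine hF₂ (h₂ _ (Submodule.smul_mem _ _ hv) (lt_of_le_of_lt ?_ d2))
    rw [smul_smul, norm_smul, norm_smul]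
    gcongr
    rw [Real.norm_eq_abs, Real.norm_eq_abs, abs_mul, abs_mul, mul_comm,
      abs_of_pos (show (0:ℝ) < 8 by norm_num)]
    gcongr
  obtain ⟨s, hs⟩ := exists_sigmoid (k := 1/3) (by norm_num) (by norm_num)
  obtain ⟨t, ht⟩ := exists_sigmoid (k := 2/3) (by norm_num) (by norm_num)
  have hst : s < t := by rw [← Real.sigmoid_lt_iff, hs, ht]; norm_num
  have hx : geo a b s = a + (1/3 : ℝ) • (b - a) := by rw [geo, hs]
  have hy : geo a b t = a + (2/3 : ℝ) • (b - a) := by rw [geo, ht]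
  have hdist : hilbertDist Ω (geo a b s) (geo a b t) = Real.log 4 := by
    rw [h.dist_of_lt D hst, ← Real.log_exp (t - s), ← sigmoid_ratio, hs, ht]; norm_num
  set z := a + (1/2 : ℝ) • (b - a) + δ • u with hz
  have p1 : 0 < 1 - 6 * κ := by linarith
  have p2 : 0 < 3 + 6 * κ := by linarith
  have p3 : 0 < 1 + 6 * κ := by linarith
  -- `x = geo a b s`, `y = geo a b t`; the prolongations of `[x, z]` and `[z, y]`
  have f1 : z + ((3 + 6 * κ) / (1 - 6 * κ)) • (z - geo a b s) ∈ closure Ω := by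
    have e : 1 + (3 + 6 * κ) / (1 - 6 * κ) = 4 / (1 - 6 * κ) := by field_simp; ring
    have e2 := div_mul_cancel₀ (3 + 6 * κ) p1.ne'
    have := m2 (1 + (3 + 6 * κ) / (1 - 6 * κ)) (by
      rw [e, abs_of_pos (by positivity), div_le_iff₀ p1]; linarith)
    generalize (3 + 6 * κ) / (1 - 6 * κ) = r at this e2
    convert this using 1
    have e3 : (1/2 : ℝ) + r / 6 = 1 + (1 + r) * κ := by linarith
    calc z + r • (z - geo a b s) = a + ((1/2 : ℝ) + r / 6) • (b - a) + ((1 + r) * δ) • u := by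
          rw [hz, hx]; module
      _ = _ := by rw [e3, hκ]; module
  have f2 : geo a b s + (2:ℝ) • (geo a b s - z) ∈ closure Ω := by
    have := m1 (-2) (by norm_num)
    convert this using 1
    rw [hx, hz]; module
  have f3 : geo a b t + (2 / (1 + 6 * κ)) • (geo a b t - z) ∈ closure Ω := by
    have e2 := div_mul_cancel₀ 2 p3.ne'
    have := m2 (- (2 / (1 + 6 * κ))) (by
      rw [abs_neg, abs_of_pos (by positivity), div_le_iff₀ p3]; linarith)
    generalize 2 / (1 + 6 * κ) = r at this e2
    convert this using 1
    have e3 : (2/3 : ℝ) + r / 6 = 1 - r * κ := by linarith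
    calc geo a b t + r • (geo a b t - z)
        = a + ((2/3 : ℝ) + r / 6) • (b - a) - (r * δ) • u := by
          rw [hz, hy]; module
      _ = _ := by rw [e3, hκ]; module
  have f4 : z + (3:ℝ) • (z - geo a b t) ∈ closure Ω := by
    have := m1 4 (by norm_num)
    convert this using 1
    rw [hy, hz]; module
  have hzΩ : z ∈ Ω := by
    -- `z` is between `geo a b s` and a point of the closure of `Ω`
    have r0 : 0 < 1 + (3 + 6 * κ) / (1 - 6 * κ) := by positivity
    have := D.mid (h.geo_mem s) f1 (k := (1 + (3 + 6 * κ) / (1 - 6 * κ))⁻¹) (by positivity) (by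
      apply inv_lt_one_of_one_lt₀
      have : 0 < (3 + 6 * κ) / (1 - 6 * κ) := by positivity
      linarith)
    convert this using 1
    have e2 := inv_mul_cancel₀ r0.ne'
    generalize (1 + (3 + 6 * κ) / (1 - 6 * κ))⁻¹ = m at e2
    generalize (3 + 6 * κ) / (1 - 6 * κ) = r at e2
    calc z = geo a b s + (1:ℝ) • (z - geo a b s) := by module
      _ = _ := by rw [← e2]; module
  have g1 := hilbertDist_le D (h.geo_mem s) hzΩ (by positivity) (by norm_num) f1 f2
  have g2 := hilbertDist_le D hzΩ (h.geo_mem t) (by positivity) (by norm_num) f3 f4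
  have g3 := hilbertDist_triangle D (h.geo_mem s) (h.geo_mem t) hzΩ
  have hle : hilbertDist Ω (geo a b s) z + hilbertDist Ω z (geo a b t) ≤ Real.log 4 := by
    refine (add_le_add g1 g2).trans (le_of_eq ?_)
    rw [← Real.log_mul (by positivity) (by positivity)]
    congr 1
    field_simp
    ring
  intro hr
  have hmem := hr _ (mem_range_self s) _ (mem_range_self t) z hzΩ (by linarith)
  obtain ⟨r, -, -, hzr⟩ := exists_geo_of_mem_segment a b hst.le hmem
  have hw : b - a ∉ vectorSpan ℝ F₁ := fun hh => h.symm.sub_not_mem D hF₁ ha (by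
    have := Submodule.neg_mem _ hh
    rwa [neg_sub] at this)
  have e1 : (Real.sigmoid r - 1/2) • (b - a) = δ • u := by
    have : a + (1/2 : ℝ) • (b - a) + δ • u = a + Real.sigmoid r • (b - a) := hzr
    have h3 : δ • u = (a + (1/2 : ℝ) • (b - a) + δ • u) - (a + (1/2 : ℝ) • (b - a)) := by module
    rw [h3, this]; module
  by_cases hr0 : Real.sigmoid r - 1/2 = 0
  · rw [hr0, zero_smul] at e1
    rcases smul_eq_zero.1 e1.symm with h' | h'
    · exact hδ.ne' h'
    · exact hu0 h'
  · exact hw ((Submodule.smul_mem_iff _ hr0).1 (e1 ▸ Submodule.smul_mem _ _ hu))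

lemma coplanarDirs_of_not_rigid (D : CvxDom Ω) (h : IsChord Ω a b) {F₁ F₂ : Set (Euc n)}
    (hF₁ : IsFace (closure Ω) F₁) (hF₂ : IsFace (closure Ω) F₂) (ha : a ∈ F₁) (hb : b ∈ F₂)
    (hr : ¬ IsRigidSet Ω (range (geo a b))) : CoplanarDirs F₁ F₂ a b := by
  by_contra hcop
  apply hr
  rintro _ ⟨s, rfl⟩ _ ⟨t, rfl⟩ z hz heq
  by_contra hzn
  rcases lt_trichotomy s t with hst | rfl | hst
  · exact hcop (coplanarDirs_of_geodesic D h hF₁ hF₂ ha hb hst hz hzn heq)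
  · rw [hilbertDist_self] at heq
    have hne : geo a b s ≠ z := fun e => hzn (e ▸ left_mem_segment _ _ _)
    have h1 := hilbertDist_pos D (h.geo_mem s) hz hne
    have h2 := hilbertDist_nonneg D hz (h.geo_mem s)
    linarith
  · refine hcop (coplanarDirs_of_geodesic D h hF₁ hF₂ ha hb hst hz
      (by rwa [segment_symm]) ?_)
    rw [hilbertDist_comm D (h.geo_mem t) hz, hilbertDist_comm D hz (h.geo_mem s),
      hilbertDist_comm D (h.geo_mem t) (h.geo_mem s), ← heq, add_comm]

/-- Rigidity of a line depends only on the relatively open faces containing its ends. -/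
lemma rigid_transfer (D : CvxDom Ω) (h : IsChord Ω a b) (h' : IsChord Ω c d)
    {F₁ F₂ : Set (Euc n)} (hF₁ : IsFace (closure Ω) F₁) (hF₂ : IsFace (closure Ω) F₂)
    (ha : a ∈ intrinsicInterior ℝ F₁) (hb : b ∈ intrinsicInterior ℝ F₂)
    (hc : c ∈ intrinsicInterior ℝ F₁) (hd : d ∈ intrinsicInterior ℝ F₂)
    (hr : IsRigidSet Ω (range (geo a b))) : IsRigidSet Ω (range (geo c d)) := by
  by_contra hn
  have h1 := coplanarDirs_of_not_rigid D h' hF₁ hF₂ (intrinsicInterior_subset hc)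
    (intrinsicInterior_subset hd) hn
  exact not_rigid_of_coplanarDirs D h hF₁.2.1 hF₂.2.1 ha hb
    (h1.shift (intrinsicInterior_subset hc) (intrinsicInterior_subset ha)
      (intrinsicInterior_subset hd) (intrinsicInterior_subset hb)
      (h.sub_not_mem D hF₂.2.1 hb)) hr

/-! ### Asymptotic lines -/

/-- Two curves in `Ω` at bounded Hilbert distance from each other accumulate at points of
the same relatively open face. -/
lemma mem_relint_of_asymptotic (D : CvxDom Ω) {F : Set (Euc n)} (hF : IsFace (closure Ω) F)
    {l : Filter ℝ} [l.NeBot] {f g : ℝ → Euc n} (hf : Filter.Tendsto f l (nhds x))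
    (hg : Filter.Tendsto g l (nhds y)) (hfΩ : ∀ t, f t ∈ Ω) (hgΩ : ∀ t, g t ∈ Ω) {C : ℝ}
    (hC : ∀ t, hilbertDist Ω (f t) (g t) ≤ C) (hx : x ∈ intrinsicInterior ℝ F) :
    y ∈ intrinsicInterior ℝ F := by
  set e := Real.exp (-C) with he
  have hep : 0 < e := Real.exp_pos _
  have h1 : y + e • (y - x) ∈ closure Ω :=
    isClosed_closure.mem_of_tendsto (hg.add ((hg.sub hf).const_smul e))
      (Filter.Eventually.of_forall fun t => prolong_of_hilbertDist_le D (hfΩ t) (hgΩ t) (hC t))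
  have h2 : x + e • (x - y) ∈ closure Ω :=
    isClosed_closure.mem_of_tendsto (hf.add ((hf.sub hg).const_smul e))
      (Filter.Eventually.of_forall fun t => prolong_of_hilbertDist_le D (hgΩ t) (hfΩ t)
        (by rw [hilbertDist_comm D (hgΩ t) (hfΩ t)]; exact hC t))
  have hN : (1 + 2 * e)⁻¹ * (1 + 2 * e) = 1 := inv_mul_cancel₀ (by positivity)
  have hNp : 0 < (1 + 2 * e)⁻¹ := by positivity
  generalize (1 + 2 * e)⁻¹ = N at hN hNp
  have hyF : y + e • (y - x) ∈ F := by
    refine hF.2.2 h1 h2 (intrinsicInterior_subset hx)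
      ⟨N * e, N * (1 + e), by positivity, by positivity, by linarith, ?_⟩
    calc (N * e) • (y + e • (y - x)) + (N * (1 + e)) • (x + e • (x - y))
        = (N * (1 + 2 * e)) • x := by module
      _ = x := by rw [hN, one_smul]
  have := relint_mid hF.1 hx hyF (k := (1 + e)⁻¹) (by positivity)
    (inv_lt_one_of_one_lt₀ (by linarith))
  convert this using 1
  have hM : (1 + e)⁻¹ * (1 + e) = 1 := inv_mul_cancel₀ (by positivity)
  generalize (1 + e)⁻¹ = M at hM
  calc y = x + (1:ℝ) • (y - x) := by module
    _ = _ := by rw [← hM]; module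

/-- Two lines joining the same pair of relatively open faces stay at bounded distance. -/
lemma exists_dist_bound (D : CvxDom Ω) (h : IsChord Ω a b) (h' : IsChord Ω c d)
    {F₁ F₂ : Set (Euc n)} (hF₁ : F₁ ⊆ closure Ω) (hF₂ : F₂ ⊆ closure Ω)
    (ha : a ∈ intrinsicInterior ℝ F₁) (hb : b ∈ intrinsicInterior ℝ F₂)
    (hc : c ∈ intrinsicInterior ℝ F₁) (hd : d ∈ intrinsicInterior ℝ F₂) :
    ∃ C, ∀ t, hilbertDist Ω (geo a b t) (geo c d t) ≤ C := by
  have ha' := intrinsicInterior_subset ha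
  have hb' := intrinsicInterior_subset hb
  have hc' := intrinsicInterior_subset hc
  have hd' := intrinsicInterior_subset hd
  obtain ⟨e₁, p₁, h₁⟩ := relint_prolong ha (sub_mem_vectorSpan ha' hc')
  obtain ⟨e₂, p₂, h₂⟩ := relint_prolong hc (sub_mem_vectorSpan hc' ha')
  obtain ⟨e₃, p₃, h₃⟩ := relint_prolong hb (sub_mem_vectorSpan hb' hd')
  obtain ⟨e₄, p₄, h₄⟩ := relint_prolong hd (sub_mem_vectorSpan hd' hb')
  set e := min (min e₁ e₂) (min e₃ e₄) with he
  have hep : 0 < e := by positivity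
  have l₁ : |e| ≤ e₁ := by rw [abs_of_pos hep]; simp [he]
  have l₂ : |e| ≤ e₂ := by rw [abs_of_pos hep]; simp [he]
  have l₃ : |e| ≤ e₃ := by rw [abs_of_pos hep]; simp [he]
  have l₄ : |e| ≤ e₄ := by rw [abs_of_pos hep]; simp [he]
  refine ⟨_, fun t => hilbertDist_le D (h.geo_mem t) (h'.geo_mem t) hep hep ?_ ?_⟩
  · have := D.cv.closure (hF₁ (h₂ e l₂)) (hF₂ (h₄ e l₄))
      (sub_nonneg.2 (Real.sigmoid_le_one t)) (Real.sigmoid_nonneg t) (by ring)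
    convert this using 1
    simp only [geo]; module
  · have := D.cv.closure (hF₁ (h₁ e l₁)) (hF₂ (h₃ e l₃))
      (sub_nonneg.2 (Real.sigmoid_le_one t)) (Real.sigmoid_nonneg t) (by ring)
    convert this using 1
    simp only [geo]; module

/-! ### Images of rigid lines under isometries -/

/-- An isometry maps a rigid line onto a rigid line, and is a translation in terms of the
arc-length parametrisations. -/
lemma image_rigid_line (D : CvxDom Ω) (D' : CvxDom Ω') {τ : Euc n → Euc n}
    (hτ : IsHilbertIsometry Ω Ω' τ) (h : IsChord Ω a b)
    (hr : IsRigidSet Ω (range (geo a b))) :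
    ∃ a' b' r, IsChord Ω' a' b' ∧ (∀ t, τ (geo a b t) = geo a' b' (t + r)) ∧
      IsRigidSet Ω' (range (geo a' b')) := by
  obtain ⟨hm, hs, hd⟩ := hτ
  have hmem : ∀ t, τ (geo a b t) ∈ Ω' := fun t => hm (h.geo_mem t)
  have hdist : ∀ s t, hilbertDist Ω' (τ (geo a b s)) (τ (geo a b t)) = |s - t| := fun s t => by
    rw [hd _ (h.geo_mem s) _ (h.geo_mem t), h.dist_geo D]
  have hne : ∀ s t, s ≠ t → τ (geo a b s) ≠ τ (geo a b t) := fun s t hst e => by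
    have := hdist s t
    rw [e, hilbertDist_self] at this
    exact hst (sub_eq_zero.1 (abs_eq_zero.1 this.symm))
  -- geodesics between points of `τ(L)` come from `L`
  have hgeod : ∀ s t, s ≤ t → ∀ z' ∈ Ω', hilbertDist Ω' (τ (geo a b s)) z' +
      hilbertDist Ω' z' (τ (geo a b t)) = t - s →
      ∃ u, s ≤ u ∧ u ≤ t ∧ z' = τ (geo a b u) := by
    intro s t hst z' hz' heq
    obtain ⟨z, hz, rfl⟩ := hs hz'
    rw [hd _ (h.geo_mem s) _ hz, hd _ hz _ (h.geo_mem t)] at heq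
    have := hr _ (mem_range_self s) _ (mem_range_self t) z hz (by
      rw [heq, h.dist_geo D, abs_of_nonpos (by linarith)]; ring)
    obtain ⟨u, h1, h2, rfl⟩ := exists_geo_of_mem_segment a b hst this
    exact ⟨u, h1, h2, rfl⟩
  have hseg : ∀ s t, s < t → ∀ u, s ≤ u → u ≤ t →
      τ (geo a b u) ∈ segment ℝ (τ (geo a b s)) (τ (geo a b t)) := by
    intro s t hst u h1 h2
    obtain ⟨p, q, s', t', hpq, hst', es, et⟩ := D'.exists_chord (hmem s) (hmem t) (hne s t hst.ne)
    have hl : t' - s' = t - s := by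
      have := hdist s t
      rw [es, et, hpq.dist_of_lt D' hst', abs_of_neg (by linarith)] at this
      linarith
    obtain ⟨v, h3, h4, hv⟩ := hgeod s t hst.le (geo p q (s' + (u - s))) (hpq.geo_mem _) (by
      rw [es, et, hpq.dist_geo D', hpq.dist_geo D', abs_of_nonpos (by linarith),
        abs_of_nonpos (by linarith)]
      linarith)
    have huv : v = u := by
      have := hdist s v
      rw [← hv, es, hpq.dist_geo D', abs_of_nonpos (by linarith),
        abs_of_nonpos (by linarith)] at this
      linarith
    rw [← huv, ← hv, es, et]
    exact geo_mem_segment p q (by linarith) (by linarith)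
  obtain ⟨a', b', r, r1, hch, hrr, e0, e1⟩ := D'.exists_chord (hmem 0) (hmem 1)
    (hne 0 1 zero_ne_one)
  have hr1 : r1 = r + 1 := by
    have := hdist 0 1
    rw [e0, e1, hch.dist_of_lt D' hrr] at this
    norm_num at this
    linarith
  subst hr1
  -- each `τ (geo a b t)` lies on the straight line through `τ (geo a b 0)`, `τ (geo a b 1)`
  have hcol : ∀ t, ∃ k : ℝ, τ (geo a b t) =
      geo a' b' r + k • (geo a' b' (r + 1) - geo a' b' r) := by
    intro t
    rw [← e0, ← e1]
    rcases lt_or_ge t 0 with h0 | h0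
    · have := hseg t 1 (by linarith) 0 h0.le zero_le_one
      rw [segment_eq_image'] at this
      obtain ⟨θ, ⟨q0, q1⟩, hq⟩ := this
      have hθ : θ ≠ 1 := by
        rintro rfl
        apply hne 0 1 zero_ne_one
        rw [← hq]; module
      have hθ' : (1 - θ) ≠ 0 := sub_ne_zero.2 hθ.symm
      refine ⟨- θ / (1 - θ), ?_⟩
      have e := div_mul_cancel₀ (-θ) hθ'
      generalize -θ / (1 - θ) = m at e
      simp only at hq
      rw [← hq]
      generalize τ (geo a b t) = X
      generalize τ (geo a b 1) = Y
      have e' : θ + m * (1 - θ) = 0 := by linarith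
      calc X = X + (0:ℝ) • (Y - X) := by module
        _ = _ := by rw [← e']; module
    rcases le_or_gt t 1 with h1 | h1
    · have := hseg 0 1 one_pos t h0 h1
      rw [segment_eq_image'] at this
      obtain ⟨θ, -, hq⟩ := this
      exact ⟨θ, hq.symm⟩
    · have := hseg 0 t (by linarith) 1 zero_le_one h1.le
      rw [segment_eq_image'] at this
      obtain ⟨θ, ⟨q0, q1⟩, hq⟩ := this
      have hθ : θ ≠ 0 := by
        rintro rfl
        apply hne 0 1 zero_ne_one
        rw [← hq]; module
      refine ⟨θ⁻¹, ?_⟩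
      simp only at hq
      rw [← hq, add_sub_cancel_left, smul_smul, inv_mul_cancel₀ hθ]; module
  have hpar : ∀ t, τ (geo a b t) = geo a' b' (t + r) := by
    intro t
    obtain ⟨k, hk⟩ := hcol t
    have hk' : τ (geo a b t) = a' + (Real.sigmoid r +
        k * (Real.sigmoid (r + 1) - Real.sigmoid r)) • (b' - a') := by
      rw [hk]; simp only [geo]; module
    obtain ⟨v, hv⟩ := hch.exists_geo D' (hk' ▸ hmem t)
    rw [← hk'] at hv
    have d0 := hdist 0 t
    have d1 := hdist 1 t
    rw [← hv, e0, hch.dist_geo D'] at d0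
    rw [← hv, e1, hch.dist_geo D'] at d1
    have : v = t + r := by
      have s0 : (r - v)^2 = (0 - t)^2 := by rw [← sq_abs, d0, sq_abs]
      have s1 : (r + 1 - v)^2 = (1 - t)^2 := by rw [← sq_abs, d1, sq_abs]
      linarith
    rw [← hv, this]
  refine ⟨a', b', r, hch, hpar, ?_⟩
  have hpar' : ∀ t, geo a' b' t = τ (geo a b (t - r)) := fun t => by
    rw [hpar]; congr 1; ring
  have key : ∀ s t, s ≤ t → ∀ z ∈ Ω', hilbertDist Ω' (geo a' b' s) z +
      hilbertDist Ω' z (geo a' b' t) = hilbertDist Ω' (geo a' b' s) (geo a' b' t) →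
      z ∈ segment ℝ (geo a' b' s) (geo a' b' t) := by
    intro s t hst z hz heq
    rw [hch.dist_geo D', hpar' s, hpar' t, abs_of_nonpos (by linarith)] at heq
    obtain ⟨u, h1, h2, rfl⟩ := hgeod (s - r) (t - r) (by linarith) z hz (by rw [heq]; ring)
    rw [hpar]
    exact geo_mem_segment a' b' (by linarith) (by linarith)
  rintro _ ⟨s, rfl⟩ _ ⟨t, rfl⟩ z hz heq
  rcases le_total s t with hst | hst
  · exact key s t hst z hz heq
  · rw [segment_symm]
    refine key t s hst z hz ?_
    rw [hilbertDist_comm D' (hch.geo_mem t) hz, hilbertDist_comm D' hz (hch.geo_mem s),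
      hilbertDist_comm D' (hch.geo_mem t) (hch.geo_mem s), ← heq, add_comm]

lemma exists_of_mem_closure_geo {T : ℝ} (hx : x ∈ closure (geo a b '' Iic T)) :
    ∃ k, 0 ≤ k ∧ k ≤ Real.sigmoid T ∧ x = a + k • (b - a) := by
  have hc : IsCompact ((fun k : ℝ => a + k • (b - a)) '' Icc 0 (Real.sigmoid T)) :=
    isCompact_Icc.image (by fun_prop)
  have hsub : geo a b '' Iic T ⊆ (fun k : ℝ => a + k • (b - a)) '' Icc 0 (Real.sigmoid T) := by
    rintro _ ⟨t, ht, rfl⟩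
    exact ⟨_, ⟨Real.sigmoid_nonneg t, Real.sigmoid_le ht⟩, rfl⟩
  obtain ⟨k, ⟨h0, h1⟩, rfl⟩ := closure_minimal hsub hc.isClosed hx
  exact ⟨k, h0, h1, rfl⟩

/-- A ray of the line `ab` accumulating at `a` consists of points `geo a b t` with `t`
bounded above. -/
lemma ray_subset (D : CvxDom Ω) (h : IsChord Ω a b) {r : Set (Euc n)} (hr : IsRayIn Ω r)
    (hsub : r ⊆ range (geo a b)) (ha : a ∈ closure r) : ∃ T, r ⊆ geo a b '' Iic T := by
  obtain ⟨p, hp, d, hd, rfl⟩ := hr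
  obtain ⟨T, rfl⟩ := hsub ⟨⟨0, le_rfl, by simp⟩, hp⟩
  obtain ⟨e, he, hb⟩ := Metric.isOpen_iff.1 D.op _ hp
  obtain ⟨δ, hδ, h1, -, -⟩ := exists_small d d 0 he he
  have hmem : geo a b T + δ • d ∈ Ω := hb (by simpa using h1)
  obtain ⟨u, hu⟩ := hsub ⟨⟨δ, hδ.le, rfl⟩, hmem⟩
  obtain ⟨k, rfl⟩ : ∃ k : ℝ, d = k • (b - a) := by
    refine ⟨δ⁻¹ * (Real.sigmoid u - Real.sigmoid T), ?_⟩
    have : δ • d = (Real.sigmoid u - Real.sigmoid T) • (b - a) := by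
      have e2 : δ • d = geo a b u - geo a b T := by rw [hu]; simp
      rw [e2]; simp only [geo]; module
    rw [mul_smul, ← this, smul_smul, inv_mul_cancel₀ hδ.ne', one_smul]
  have hinj := smul_left_injective ℝ (sub_ne_zero.2 (h.ne D).symm)
  have hpt : ∀ t v : ℝ, geo a b v = geo a b T + t • k • (b - a) →
      Real.sigmoid v = Real.sigmoid T + t * k := fun t v e => by
    apply hinj
    have : a + Real.sigmoid v • (b - a) = a + (Real.sigmoid T + t * k) • (b - a) := by
      rw [show a + Real.sigmoid v • (b - a) = geo a b v from rfl, e]; simp only [geo]; module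
    exact add_left_cancel this
  refine ⟨T, ?_⟩
  rcases le_or_gt k 0 with hk | hk
  · rintro x ⟨⟨t, ht, rfl⟩, hx⟩
    obtain ⟨v, hv⟩ := hsub ⟨⟨t, ht, rfl⟩, hx⟩
    refine ⟨v, Real.sigmoid_le_iff.1 ?_, hv⟩
    rw [hpt t v hv]; nlinarith
  · exfalso
    have : {x | ∃ t : ℝ, 0 ≤ t ∧ x = geo a b T + t • k • (b - a)} ∩ Ω ⊆
        geo b a '' Iic (-T) := by
      rintro x ⟨⟨t, ht, rfl⟩, hx⟩
      obtain ⟨v, hv⟩ := hsub ⟨⟨t, ht, rfl⟩, hx⟩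
      refine ⟨-v, neg_le_neg (Real.sigmoid_le_iff.1 ?_), by rw [geo_symm, hv]⟩
      rw [hpt t v hv]; nlinarith
    obtain ⟨q, -, hq, e⟩ := exists_of_mem_closure_geo (closure_mono this ha)
    have hq1 := hq.trans_lt (Real.sigmoid_lt_one _)
    have : (1 - q) • (b - a) = 0 := by
      have e3 : (1 - q) • (b - a) = (b + q • (a - b)) - a := by module
      rw [e3, ← e, sub_self]
    rcases smul_eq_zero.1 this with h' | h'
    · linarith
    · exact h.ne D (sub_eq_zero.1 h').symm

/-- The image of the end `a` of a line is the corresponding end of the image line. -/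
lemma end_eq (D : CvxDom Ω) (D' : CvxDom Ω') {τ : Euc n → Euc n} (h : IsChord Ω a b)
    {a₀ b₀ : Euc n} (h₀ : IsChord Ω' a₀ b₀) {q : ℝ}
    (hpar : ∀ t, τ (geo a b t) = geo a₀ b₀ (t + q)) {r : Set (Euc n)} (hr : IsRayIn Ω r)
    (hsub : r ⊆ range (geo a b)) (ha : a ∈ closure r) (hx : IsBdryLimit Ω' (τ '' r) x) :
    x = a₀ := by
  obtain ⟨T, hT⟩ := ray_subset D h hr hsub ha
  have : τ '' r ⊆ geo a₀ b₀ '' Iic (T + q) := by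
    rintro _ ⟨y, hy, rfl⟩
    obtain ⟨t, ht, rfl⟩ := hT hy
    refine ⟨t + q, ?_, (hpar t).symm⟩
    simp only [mem_Iic] at ht ⊢
    linarith
  obtain ⟨k, h0, h1, rfl⟩ := exists_of_mem_closure_geo (closure_mono this hx.2)
  rcases h0.eq_or_lt with rfl | h0
  · simp
  · exact absurd (h₀.2.2 k h0 (h1.trans_lt (Real.sigmoid_lt_one _))) (D'.not_mem hx.1)

/-- An isometry maps the join of `I₁, I₂` into the join of the faces met by the image of
one of its lines. -/
lemma image_join_subset (D : CvxDom Ω) (D' : CvxDom Ω') {τ : Euc n → Euc n}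
    (hτ : IsHilbertIsometry Ω Ω' τ) {F₁ F₂ F₁' F₂' : Set (Euc n)}
    (hF₁ : IsFace (closure Ω) F₁) (hF₂ : IsFace (closure Ω) F₂)
    (hF₁' : IsFace (closure Ω') F₁') (hF₂' : IsFace (closure Ω') F₂')
    (hopp : AreOppositeRigid Ω (intrinsicInterior ℝ F₁) (intrinsicInterior ℝ F₂))
    (h : IsChord Ω a b) (ha : a ∈ intrinsicInterior ℝ F₁) (hb : b ∈ intrinsicInterior ℝ F₂)
    {a' b' : Euc n} {r : ℝ} (h' : IsChord Ω' a' b')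
    (hpar : ∀ t, τ (geo a b t) = geo a' b' (t + r))
    (ha' : a' ∈ intrinsicInterior ℝ F₁') (hb' : b' ∈ intrinsicInterior ℝ F₂') :
    τ '' joinOf Ω (intrinsicInterior ℝ F₁) (intrinsicInterior ℝ F₂) ⊆
      joinOf Ω' (intrinsicInterior ℝ F₁') (intrinsicInterior ℝ F₂') := by
  rintro _ ⟨x, ⟨M, p, q, hM, hp, hq, hx⟩, rfl⟩
  have hrig := hopp.2 M p q hM hp hq
  obtain ⟨hpq, rfl⟩ := (isLineFromTo_iff D).1 hM
  obtain ⟨p', q', r', hpq', hpar', -⟩ := image_rigid_line D D' hτ hpq hrig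
  obtain ⟨C, hC⟩ := exists_dist_bound D h hpq hF₁.2.1 hF₂.2.1 ha hb hp hq
  have hC' : ∀ t, hilbertDist Ω' (geo a' b' (t + r)) (geo p' q' (t + r')) ≤ C := fun t => by
    rw [← hpar, ← hpar', hτ.2.2 _ (h.geo_mem t) _ (hpq.geo_mem t)]; exact hC t
  have hp' : p' ∈ intrinsicInterior ℝ F₁' :=
    mem_relint_of_asymptotic D' hF₁'
      ((tendsto_geo_atBot a' b').comp (Filter.tendsto_atBot_add_const_right _ r Filter.tendsto_id))
      ((tendsto_geo_atBot p' q').comp (Filter.tendsto_atBot_add_const_right _ r' Filter.tendsto_id))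
      (fun t => h'.geo_mem _) (fun t => hpq'.geo_mem _) hC' ha'
  have hq' : q' ∈ intrinsicInterior ℝ F₂' :=
    mem_relint_of_asymptotic D' hF₂'
      ((tendsto_geo_atTop a' b').comp (Filter.tendsto_atTop_add_const_right _ r Filter.tendsto_id))
      ((tendsto_geo_atTop p' q').comp (Filter.tendsto_atTop_add_const_right _ r' Filter.tendsto_id))
      (fun t => h'.geo_mem _) (fun t => hpq'.geo_mem _) hC' hb'
  obtain ⟨t, rfl⟩ := hx
  exact ⟨range (geo p' q'), p', q', (isLineFromTo_iff D').2 ⟨hpq', rfl⟩, hp', hq',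
    ⟨t + r', (hpar' t).symm⟩⟩

end

/-- Let `τ : Ω → Ω'` be an isometry of Hilbert geometries, let
`I₁, I₂` be the relative interiors of two opposite rigid faces of the closure of `Ω`,
and let `J` be their join. Let `L` be a line in `Ω` from `I₁` to `I₂`, and let
`I₁', I₂'` be the relative interiors of the faces of the closure of `Ω'` containing the
accumulation points `a', b'` of `τ(L)` on `∂Ω'`, with `a'` the image of the end of `L`
at `I₁` (witnessed by a ray `r ⊆ L` towards `a` whose image accumulates at `a'`). Then
`I₁'` and `I₂'` are opposite rigid faces of the closure of `Ω'` (so their join `J'` is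
rigid) and `τ(J) = J'`. -/
theorem stmt_10 {n : ℕ} (Ω Ω' : Set (Euc n))
    (hne : Ω.Nonempty) (hop : IsOpen Ω) (hbd : Bornology.IsBounded Ω) (hcv : Convex ℝ Ω)
    (hne' : Ω'.Nonempty) (hop' : IsOpen Ω') (hbd' : Bornology.IsBounded Ω')
    (hcv' : Convex ℝ Ω') (τ : Euc n → Euc n) (hτ : IsHilbertIsometry Ω Ω' τ)
    (F₁ F₂ : Set (Euc n)) (hF₁ : IsFace (closure Ω) F₁) (hF₂ : IsFace (closure Ω) F₂)
    (I₁ I₂ : Set (Euc n)) (hI₁ : I₁ = intrinsicInterior ℝ F₁)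
    (hI₂ : I₂ = intrinsicInterior ℝ F₂) (hopp : AreOppositeRigid Ω I₁ I₂)
    (L : Set (Euc n)) (a b : Euc n) (hL : IsLineFromTo Ω L a b)
    (ha : a ∈ I₁) (hb : b ∈ I₂)
    (a' b' : Euc n) (hab' : a' ≠ b')
    (ha' : ∃ r : Set (Euc n), IsRayIn Ω r ∧ r ⊆ L ∧ IsBdryLimit Ω r a ∧
      IsBdryLimit Ω' (τ '' r) a')
    (hb' : ∃ r : Set (Euc n), IsRayIn Ω r ∧ r ⊆ L ∧ IsBdryLimit Ω r b ∧
      IsBdryLimit Ω' (τ '' r) b')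
    (F₁' F₂' : Set (Euc n)) (hF₁' : IsFace (closure Ω') F₁')
    (hF₂' : IsFace (closure Ω') F₂')
    (ha'' : a' ∈ intrinsicInterior ℝ F₁') (hb'' : b' ∈ intrinsicInterior ℝ F₂') :
    AreOppositeRigid Ω' (intrinsicInterior ℝ F₁') (intrinsicInterior ℝ F₂') ∧
      τ '' joinOf Ω I₁ I₂ =
        joinOf Ω' (intrinsicInterior ℝ F₁') (intrinsicInterior ℝ F₂') := by
  subst hI₁ hI₂
  have D : CvxDom Ω := ⟨hop, hbd, hcv⟩
  have D' : CvxDom Ω' := ⟨hop', hbd', hcv'⟩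
  have hrig := hopp.2 L a b hL ha hb
  obtain ⟨hab, rfl⟩ := (isLineFromTo_iff D).1 hL
  obtain ⟨a₀, b₀, q, h₀, hpar, hrig₀⟩ := image_rigid_line D D' hτ hab hrig
  have hpar_symm : ∀ t, τ (geo b a t) = geo b₀ a₀ (t + -q) := fun t => by
    rw [← geo_symm b a, hpar, ← geo_symm b₀ a₀]; congr 1; ring
  have hrange : range (geo b a) = range (geo a b) := by
    ext z
    constructor
    · rintro ⟨t, rfl⟩; exact ⟨-t, geo_symm b a t⟩
    · rintro ⟨t, rfl⟩; exact ⟨-t, geo_symm a b t⟩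
  obtain rfl : a' = a₀ := by
    obtain ⟨r, hr, hrL, hra, hra'⟩ := ha'
    exact end_eq D D' hab h₀ hpar hr hrL hra.2 hra'
  obtain rfl : b' = b₀ := by
    obtain ⟨r, hr, hrL, hrb, hrb'⟩ := hb'
    exact end_eq D D' hab.symm h₀.symm hpar_symm hr (hrange ▸ hrL) hrb.2 hrb'
  have hopp' : AreOppositeRigid Ω' (intrinsicInterior ℝ F₁') (intrinsicInterior ℝ F₂') := by
    refine ⟨⟨_, a', b', (isLineFromTo_iff D').2 ⟨h₀, rfl⟩, ha'', hb''⟩, ?_⟩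
    intro M c d hM hc hd
    obtain ⟨hcd, rfl⟩ := (isLineFromTo_iff D').1 hM
    exact rigid_transfer D' h₀ hcd hF₁' hF₂' ha'' hb'' hc hd hrig₀
  refine ⟨hopp', Subset.antisymm
    (image_join_subset D D' hτ hF₁ hF₂ hF₁' hF₂' hopp hab ha hb h₀ hpar ha'' hb'') ?_⟩
  -- the reverse inclusion is the direct one for the inverse isometry
  have hinj : InjOn τ Ω := fun x hx y hy e => by
    by_contra hne'
    have := hτ.2.2 x hx y hy
    rw [e, hilbertDist_self] at this
    exact (hilbertDist_pos D hx hy hne').ne this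
  have hmaps : ∀ y ∈ Ω', Function.invFunOn τ Ω y ∈ Ω := fun y hy =>
    Function.invFunOn_mem (hτ.2.1 hy)
  have hright : ∀ y ∈ Ω', τ (Function.invFunOn τ Ω y) = y := fun y hy =>
    Function.invFunOn_eq (hτ.2.1 hy)
  have hleft : ∀ x ∈ Ω, Function.invFunOn τ Ω (τ x) = x := fun x hx =>
    hinj (hmaps _ (hτ.1 hx)) hx (hright _ (hτ.1 hx))
  have hinv : IsHilbertIsometry Ω' Ω (Function.invFunOn τ Ω) := by
    refine ⟨hmaps, fun x hx => ⟨τ x, hτ.1 hx, hleft x hx⟩, fun x hx y hy => ?_⟩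
    rw [← hτ.2.2 _ (hmaps x hx) _ (hmaps y hy), hright x hx, hright y hy]
  have hpar_inv : ∀ t, Function.invFunOn τ Ω (geo a' b' t) = geo a b (t + -q) := fun t => by
    rw [← hleft _ (hab.geo_mem (t + -q)), hpar, neg_add_cancel_right]
  have hsub := image_join_subset D' D hinv hF₁' hF₂' hF₁ hF₂ hopp' h₀ ha'' hb'' hab hpar_inv ha hb
  intro y hy
  have hyΩ : y ∈ Ω' := by
    obtain ⟨M, c, d, hM, -, -, hyM⟩ := hy
    obtain ⟨hcd, rfl⟩ := (isLineFromTo_iff D').1 hM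
    obtain ⟨t, rfl⟩ := hyM
    exact hcd.geo_mem t
  exact ⟨_, hsub (mem_image_of_mem _ hy), hright y hyΩ⟩
end
end

section
/- Let Ω be an open bounded convex set in ℝⁿ with its Hilbert metric and let r₁, r₂ be rays in Ω with a(r₁) ≠ a(r₂) such that a(r₁) is an extreme point of the closure of Ω. Then for any sequence of points xₙ on r₁ converging to a(r₁) and any sequence of points yₙ on r₂ converging to a(r₂), the distances d_Ω(xₙ,yₙ) tend to infinity as n → ∞. -/
/-!
Let `αₖ` be the boundary point behind `xₖ` on the line through `xₖ` and `yₖ`. The cross-ratio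
factor at the opposite end is at least `1`, so `d(xₖ, yₖ) ≥ log (|αₖ - yₖ| / |αₖ - xₖ|)`
(`exists_log_le_hilbertDist`). By compactness `αₖ → a₁`: if `α` is a limit point of `(αₖ)`, then
`a₁` lies on the segment `[α, a₂]` in the closure of `Ω`, and since `a₁` is extreme and
`a₁ ≠ a₂`, necessarily `α = a₁` (`tendsto_of_wbtw_of_extreme`). Hence the denominator tends to `0`
while the numerator tends to `|a₁ - a₂| > 0`, and the lower bound diverges.
-/

open Set
open scoped LinearAlgebra.Projectivization
open scoped Classical

noncomputable section

/-- On the ray from a point `x` of a bounded convex open set through another point `y` of it there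
is a boundary point, and it lies beyond `y`. -/
lemma exists_frontier_beyond {n : ℕ} {Ω : Set (Euc n)} (hop : IsOpen Ω)
    (hbd : Bornology.IsBounded Ω) (hcv : Convex ℝ Ω) {x y : Euc n} (hx : x ∈ Ω) (hy : y ∈ Ω)
    (hxy : x ≠ y) :
    ∃ β ∈ frontier Ω, Collinear ℝ ({β, x, y} : Set (Euc n)) ∧ dist β y < dist β x := by
  have hpos : 0 < ‖y - x‖ := norm_pos_iff.2 (sub_ne_zero.2 hxy.symm)
  have hconn : IsPreconnected ((fun t : ℝ => x + t • (y - x)) '' Ici 0) :=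
    isPreconnected_Ici.image _ (by fun_prop)
  obtain ⟨R, hR⟩ := hbd.subset_closedBall x
  have hout : x + ((|R| + 1) / ‖y - x‖) • (y - x) ∉ Ω := by
    intro h
    have h2 := hR h
    rw [Metric.mem_closedBall, dist_eq_norm, add_sub_cancel_left, norm_smul, Real.norm_eq_abs,
      abs_of_pos (by positivity), div_mul_cancel₀ _ hpos.ne'] at h2
    linarith [le_abs_self R]
  obtain ⟨t, ht0, hβ⟩ : ∃ t : ℝ, 0 ≤ t ∧ x + t • (y - x) ∈ frontier Ω := by
    -- Otherwise `Ω` and the exterior of `Ω` would disconnect the ray.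
    by_contra! hno
    have hex : ∀ t : ℝ, 0 ≤ t → x + t • (y - x) ∉ Ω → x + t • (y - x) ∈ (closure Ω)ᶜ :=
      fun t ht h hcl => hno t ht ⟨hcl, hop.interior_eq.symm ▸ h⟩
    have hs : 0 ≤ (|R| + 1) / ‖y - x‖ := by positivity
    obtain ⟨z, -, hz, hz'⟩ := hconn Ω (closure Ω)ᶜ hop isClosed_closure.isOpen_compl
      (by
        rintro _ ⟨t, ht, rfl⟩
        exact or_iff_not_imp_left.2 (hex t ht))
      ⟨x, ⟨0, by simp, by simp⟩, hx⟩ ⟨_, ⟨_, hs, rfl⟩, hex _ hs hout⟩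
    exact hz' (subset_closure hz)
  have hnot : x + t • (y - x) ∉ Ω := fun h =>
    hop.inter_frontier_eq.subset ⟨h, hβ⟩
  have ht1 : 1 < t := by
    by_contra! h
    exact hnot (hcv.add_smul_sub_mem hx hy ⟨ht0, h⟩)
  refine ⟨_, hβ, ?_, ?_⟩
  · have hw : Wbtw ℝ x y (x + t • (y - x)) := by
      refine ⟨t⁻¹, ⟨by positivity, inv_le_one_of_one_le₀ ht1.le⟩, ?_⟩
      have : t ≠ 0 := by positivity
      simp [AffineMap.lineMap_apply, smul_smul, this]
    have := hw.collinear
    rw [show ({x, y, x + t • (y - x)} : Set (Euc n)) = {x + t • (y - x), x, y} by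
      ext; simp only [mem_insert_iff, mem_singleton_iff]; tauto] at this
    exact this
  · have e1 : x + t • (y - x) - y = (t - 1) • (y - x) := by module
    rw [dist_eq_norm, dist_eq_norm, e1, add_sub_cancel_left, norm_smul, norm_smul,
      Real.norm_eq_abs, Real.norm_eq_abs, abs_of_pos (by linarith), abs_of_pos (by linarith)]
    nlinarith

/-- The distance dominates its one-sided (Funk) part: the factor belonging to the boundary point
`β` behind `y` is at least `1`. -/
lemma exists_log_le_hilbertDist {n : ℕ} {Ω : Set (Euc n)} (hop : IsOpen Ω)
    (hbd : Bornology.IsBounded Ω) (hcv : Convex ℝ Ω) {x y : Euc n} (hx : x ∈ Ω) (hy : y ∈ Ω)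
    (hxy : x ≠ y) :
    ∃ α ∈ frontier Ω, Wbtw ℝ α x y ∧ Real.log (dist α y / dist α x) ≤ hilbertDist Ω x y := by
  have hex : ∃ p : Euc n × Euc n, IsHilbertPair Ω x y p.1 p.2 := by
    obtain ⟨β, hβ, hβc, hβd⟩ := exists_frontier_beyond hop hbd hcv hx hy hxy
    obtain ⟨α, hα, hαc, hαd⟩ := exists_frontier_beyond hop hbd hcv hy hx hxy.symm
    exact ⟨(α, β), hα, hβ, by rwa [pair_comm x y], hβc, hαd, hβd⟩
  have hdisj : ∀ z ∈ frontier Ω, z ∉ Ω := fun z hz h =>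
    hop.inter_frontier_eq.subset ⟨h, hz⟩
  rw [hilbertDist, dif_pos hex]
  obtain ⟨hα, hβ, hαc, -, hαd, hβd⟩ := hex.choose_spec
  set α := hex.choose.1
  set β := hex.choose.2
  have hαx : 0 < dist α x := dist_pos.2 fun h => hdisj _ hα (h ▸ hx)
  have hβy : 0 < dist β y := dist_pos.2 fun h => hdisj _ hβ (h ▸ hy)
  refine ⟨α, hα, ?_, ?_⟩
  · rcases hαc.wbtw_or_wbtw_or_wbtw with h | h | h
    · exact h
    · have := h.dist_add_dist
      rw [dist_comm y α, dist_comm x α] at this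
      linarith [dist_nonneg (x := x) (y := y)]
    · exact absurd (hcv.segment_subset hy hx (mem_segment_iff_wbtw.2 h)) (hdisj _ hα)
  · have h1 : 0 < dist α y / dist α x := div_pos (hαx.trans hαd) hαx
    apply Real.log_le_log h1
    exact le_mul_of_one_le_right h1.le ((one_le_div hβy).2 hβd.le)

open Filter in
/-- If `αₖ ∈ C` lies on the line through `xₖ → a` and `yₖ → b ≠ a`, on the far side of `xₖ`, and
`a` is an extreme point of the compact set `C`, then `αₖ → a`: for any limit point `α` the
point `a` lies on the segment `[α, b]`. -/
lemma tendsto_of_wbtw_of_extreme {n : ℕ} {C : Set (Euc n)} (hC : IsCompact C)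
    {a b : Euc n} (hab : a ≠ b) (ha : a ∈ Set.extremePoints ℝ C) (hb : b ∈ C)
    {x y α : ℕ → Euc n} (hx : Tendsto x atTop (nhds a)) (hy : Tendsto y atTop (nhds b))
    (hα : ∀ᶠ k in atTop, α k ∈ C ∧ Wbtw ℝ (α k) (x k) (y k)) :
    Tendsto α atTop (nhds a) := by
  rw [tendsto_iff_ultrafilter]
  intro u hu
  obtain ⟨α', hα'C, hα'⟩ := isCompact_iff_ultrafilter_le_nhds.1 hC (u.map α) (by
    rw [le_principal_iff]
    exact hu (hα.mono fun k hk => hk.1))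
  have hlim : Tendsto α u (nhds α') := hα'
  have hxu := hx.mono_left hu
  have hyu := hy.mono_left hu
  have hdist : dist α' a + dist a b = dist α' b := by
    refine tendsto_nhds_unique ((hlim.dist hxu).add (hxu.dist hyu)) ((hlim.dist hyu).congr' ?_)
    filter_upwards [hu hα] with k hk
    exact hk.2.dist_add_dist.symm
  have hw : Wbtw ℝ α' a b := dist_add_dist_eq_iff.1 hdist
  by_cases h : α' = a
  · exact h ▸ hlim
  · exact absurd (mem_extremePoints.1 ha |>.2 α' hα'C b hb
      (mem_openSegment_of_ne_left_right h hab.symm (mem_segment_iff_wbtw.2 hw))).2 hab.symm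

open Filter in
/-- Let `Ω ⊆ ℝⁿ` be an open bounded convex set with its Hilbert metric
and let `r₁, r₂` be rays in `Ω` with `a(r₁) ≠ a(r₂)` such that `a(r₁)` is an extreme
point of the closure of `Ω`. Then for any sequences `xₖ` on `r₁` converging to `a(r₁)`
and `yₖ` on `r₂` converging to `a(r₂)`, the distances `d_Ω(xₖ, yₖ)` tend to infinity. -/
theorem stmt_12 {n : ℕ} (Ω : Set (Euc n))
    (hne : Ω.Nonempty) (hop : IsOpen Ω) (hbd : Bornology.IsBounded Ω) (hcv : Convex ℝ Ω)
    (r₁ r₂ : Set (Euc n)) (hr₁ : IsRayIn Ω r₁) (hr₂ : IsRayIn Ω r₂)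
    (a₁ a₂ : Euc n) (ha₁ : IsBdryLimit Ω r₁ a₁) (ha₂ : IsBdryLimit Ω r₂ a₂)
    (hne12 : a₁ ≠ a₂) (hext : a₁ ∈ Set.extremePoints ℝ (closure Ω))
    (x y : ℕ → Euc n) (hx : ∀ k, x k ∈ r₁) (hy : ∀ k, y k ∈ r₂)
    (hxa : Tendsto x atTop (nhds a₁)) (hya : Tendsto y atTop (nhds a₂)) :
    Tendsto (fun k => hilbertDist Ω (x k) (y k)) atTop atTop := by
  have hrΩ : ∀ r : Set (Euc n), IsRayIn Ω r → r ⊆ Ω := by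
    rintro r ⟨p, -, d, -, rfl⟩
    exact inter_subset_right
  have hxΩ := fun k => hrΩ r₁ hr₁ (hx k)
  have hyΩ := fun k => hrΩ r₂ hr₂ (hy k)
  have hxy : ∀ᶠ k in atTop, x k ≠ y k := by
    have := (hxa.dist hya).eventually_ne (dist_ne_zero.2 hne12)
    exact this.mono fun k hk => dist_ne_zero.1 hk
  have key : ∀ k, ∃ α, x k ≠ y k → α ∈ frontier Ω ∧ Wbtw ℝ α (x k) (y k) ∧
      Real.log (dist α (y k) / dist α (x k)) ≤ hilbertDist Ω (x k) (y k) := by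
    intro k
    by_cases h : x k = y k
    · exact ⟨0, fun h' => absurd h h'⟩
    · obtain ⟨α, h1, h2⟩ := exists_log_le_hilbertDist hop hbd hcv (hxΩ k) (hyΩ k) h
      exact ⟨α, fun _ => ⟨h1, h2⟩⟩
  choose α hα using key
  have hαlim : Tendsto α atTop (nhds a₁) :=
    tendsto_of_wbtw_of_extreme hbd.isCompact_closure hne12 hext
      (frontier_subset_closure ha₂.1) hxa hya
      (hxy.mono fun k hk => ⟨frontier_subset_closure (hα k hk).1, (hα k hk).2.1⟩)
  have hden : Tendsto (fun k => dist (α k) (x k)) atTop (nhdsWithin 0 (Ioi 0)) := by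
    refine tendsto_nhdsWithin_iff.2 ⟨by simpa using hαlim.dist hxa, hxy.mono fun k hk => ?_⟩
    refine dist_pos.2 fun h => ?_
    have h2 : x k ∈ Ω ∩ frontier Ω := ⟨hxΩ k, h ▸ (hα k hk).1⟩
    rw [hop.inter_frontier_eq] at h2
    exact h2
  have hratio : Tendsto (fun k => dist (α k) (y k) / dist (α k) (x k)) atTop atTop := by
    simp only [div_eq_mul_inv]
    exact Tendsto.pos_mul_atTop (dist_pos.2 hne12) (hαlim.dist hya) hden.inv_tendsto_nhdsGT_zero
  exact tendsto_atTop_mono' _ (hxy.mono fun k hk => (hα k hk).2.2)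
    (Real.tendsto_log_atTop.comp hratio)
end
end

section
/- Let Ω be an open bounded convex set in ℝⁿ with its Hilbert metric and let r₁, r₂ be rays in Ω such that a(r₁) and a(r₂) are contained in the relative interior of the same proper face of the closure of Ω. Then there exist sequences of points xₙ on r₁ and yₙ on r₂ converging in ℝⁿ to a(r₁) and a(r₂) respectively, and a constant C, such that d_Ω(xₙ,yₙ) ≤ C for all n. -/
/-!
Write `p`, `q` for the origins of the rays and set `xₜ = a₁ + t (p - a₁)`, `yₜ = a₂ + t (q - a₂)`.
Since `a₁`, `a₂` are relative interior points of `F`, both `a₁ + ε (a₁ - a₂)` and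
`a₂ + ε (a₂ - a₁)` lie in `F` for small `ε > 0` (`eventually_lineMap_mem`); since `Ω` is open,
`p + ε (p - q)` and `q + ε (q - p)` lie in `Ω` for small `ε > 0`. With one `ε` for all four,
convexity shows that the segment `[xₜ, yₜ]` can be prolonged inside `Ω` at both ends by `ε` times
its own length, uniformly in `t`. Hence both factors of the cross ratio are at most `1 + 1/ε`
(`dist_ratio_le`), which bounds the Hilbert distance by `log ((1 + 1/ε)²)`.
-/

open Set
open scoped LinearAlgebra.Projectivization
open scoped Classical

noncomputable section

/-- If `[x, y]` can be prolonged inside `Ω` beyond `x` by `δ` times its length, then the boundary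
point `α` of the line through `x`, `y` on the side of `x` satisfies `|α-y|/|α-x| ≤ 1 + 1/δ`. -/
lemma dist_ratio_le {n : ℕ} {Ω : Set (Euc n)} (hop : IsOpen Ω) (hcv : Convex ℝ Ω)
    {x y α : Euc n} {δ : ℝ} (hδ : 0 < δ) (hy : y ∈ Ω)
    (hu : AffineMap.lineMap x y (-δ) ∈ Ω) (hα : α ∈ frontier Ω)
    (hcol : Collinear ℝ ({α, x, y} : Set (Euc n))) (hlt : dist α x < dist α y) :
    dist α y / dist α x ≤ 1 + 1 / δ := by
  have hxy : x ≠ y := by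
    rintro rfl
    exact lt_irrefl _ hlt
  have hD : 0 < dist x y := dist_pos.2 hxy
  obtain ⟨s, rfl⟩ : ∃ s : ℝ, AffineMap.lineMap x y s = α := by
    have := hcol.mem_affineSpan_of_mem_of_ne (p₁ := x) (p₂ := y) (p₃ := α)
      (by simp) (by simp) (by simp) hxy
    exact mem_affineSpan_pair_iff_exists_lineMap_eq.1 this
  rw [dist_lineMap_left, dist_lineMap_right, Real.norm_eq_abs, Real.norm_eq_abs] at *
  have hs : |s| < |1 - s| := lt_of_mul_lt_mul_right hlt hD.le
  have hs1 : s < 1 := by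
    by_contra! h
    rw [abs_of_nonneg (by linarith), abs_of_nonpos (by linarith)] at hs
    linarith
  -- All parameters in `[-δ, 1]` give points of the open set `Ω`, hence no boundary points.
  have hsδ : s < -δ := by
    by_contra! h
    have hmem : AffineMap.lineMap x y s ∈ Ω := by
      have hline : Convex ℝ ((AffineMap.lineMap x y : ℝ →ᵃ[ℝ] Euc n) ⁻¹' Ω) :=
        hcv.affine_preimage _
      refine hline.ordConnected.out (x := -δ) (y := 1) hu ?_ ⟨h, hs1.le⟩
      simpa using hy
    rw [hop.frontier_eq] at hα
    exact hα.2 hmem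
  rw [mul_div_mul_right _ _ hD.ne', abs_of_nonneg (by linarith : 0 ≤ 1 - s),
    abs_of_neg (by linarith : s < 0), div_le_iff₀ (by linarith)]
  have : 1 ≤ 1 / δ * (-s) := by
    rw [one_div, inv_mul_eq_div, le_div_iff₀ hδ]
    linarith
  linarith

/-- The Hilbert distance is bounded in terms of how far `[x, y]` can be prolonged inside `Ω`,
relative to its length. -/
lemma hilbertDist_le_s13 {n : ℕ} {Ω : Set (Euc n)} (hop : IsOpen Ω) (hcv : Convex ℝ Ω)
    {x y : Euc n} {δ : ℝ} (hδ : 0 < δ) (hx : x ∈ Ω) (hy : y ∈ Ω)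
    (hu : AffineMap.lineMap x y (-δ) ∈ Ω) (hv : AffineMap.lineMap y x (-δ) ∈ Ω) :
    hilbertDist Ω x y ≤ Real.log ((1 + 1 / δ) * (1 + 1 / δ)) := by
  have h1 : 1 ≤ 1 + 1 / δ := by
    have : 0 < 1 / δ := by positivity
    linarith
  unfold hilbertDist
  split_ifs with h
  · obtain ⟨hα, hβ, hcα, hcβ, hlα, hlβ⟩ := h.choose_spec
    have hne : ∀ z ∈ frontier Ω, ∀ w ∈ Ω, 0 < dist z w := by
      intro z hz w hw
      rw [hop.frontier_eq] at hz
      exact dist_pos.2 fun e => hz.2 (e ▸ hw)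
    rw [Set.pair_comm x y] at hcβ
    have e1 := dist_ratio_le hop hcv hδ hy hu hα hcα hlα
    have e2 := dist_ratio_le hop hcv hδ hx hv hβ hcβ hlβ
    refine Real.log_le_log ?_ (mul_le_mul e1 e2 (by positivity) (by linarith))
    exact mul_pos (div_pos (hne _ hα _ hy) (hne _ hα _ hx))
      (div_pos (hne _ hβ _ hx) (hne _ hβ _ hy))
  · exact Real.log_nonneg (by nlinarith)

open Filter Topology in
lemma eventually_lineMap_mem {n : ℕ} {F : Set (Euc n)} {a b : Euc n}
    (ha : a ∈ intrinsicInterior ℝ F) (hb : b ∈ F) :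
    ∀ᶠ ε in 𝓝 (0 : ℝ), AffineMap.lineMap a b (-ε) ∈ F := by
  obtain ⟨a', ha', rfl⟩ := mem_intrinsicInterior.1 ha
  have hb' : b ∈ affineSpan ℝ F := subset_affineSpan ℝ F hb
  let g : ℝ → affineSpan ℝ F := fun ε =>
    ⟨AffineMap.lineMap (a' : Euc n) b (-ε), AffineMap.lineMap_mem _ a'.2 hb'⟩
  have hg : Continuous g :=
    (AffineMap.lineMap_continuous.comp continuous_neg).subtype_mk _
  have hg0 : g 0 = a' := by
    ext1
    simp [g]
  have : ∀ᶠ ε in 𝓝 (0 : ℝ), g ε ∈ interior ((↑) ⁻¹' F : Set (affineSpan ℝ F)) :=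
    hg.continuousAt.eventually_mem (by rw [hg0]; exact isOpen_interior.mem_nhds ha')
  filter_upwards [this] with ε hε
  exact (interior_subset hε : g ε ∈ _)

open Filter Topology in
lemma eventually_lineMap_mem_open {n : ℕ} {Ω : Set (Euc n)} (hop : IsOpen Ω) {p : Euc n}
    (q : Euc n) (hp : p ∈ Ω) :
    ∀ᶠ ε in 𝓝 (0 : ℝ), AffineMap.lineMap p q (-ε) ∈ Ω := by
  have hc : Continuous fun ε : ℝ => (AffineMap.lineMap p q (-ε) : Euc n) :=
    AffineMap.lineMap_continuous.comp continuous_neg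
  exact hc.continuousAt.eventually_mem (hop.mem_nhds (by simpa using hp))

lemma lineMap_mem_of_closure {n : ℕ} {Ω : Set (Euc n)} (hop : IsOpen Ω) (hcv : Convex ℝ Ω)
    {a p : Euc n} (ha : a ∈ closure Ω) (hp : p ∈ Ω) {t : ℝ} (h0 : 0 < t) (h1 : t ≤ 1) :
    AffineMap.lineMap a p t ∈ Ω := by
  rw [AffineMap.lineMap_apply_module]
  have := hcv.combo_closure_interior_mem_interior ha (by rwa [hop.interior_eq])
    (sub_nonneg.2 h1) h0 (sub_add_cancel 1 t)
  rwa [hop.interior_eq] at this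

/-- The half-open segment from the origin `p` of a ray towards a limit point `a` of the ray is
contained in the ray. -/
lemma lineMap_mem_ray {n : ℕ} {Ω r : Set (Euc n)} (hop : IsOpen Ω) (hcv : Convex ℝ Ω)
    {p d a : Euc n} (hp : p ∈ Ω) (hd : d ≠ 0)
    (hr : r = {x | ∃ t : ℝ, 0 ≤ t ∧ x = p + t • d} ∩ Ω) (ha : a ∈ closure r)
    {t : ℝ} (h0 : 0 < t) (h1 : t ≤ 1) : AffineMap.lineMap a p t ∈ r := by
  have haΩ : a ∈ closure Ω := closure_mono (hr ▸ inter_subset_right) ha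
  have hcl : IsClosed {x : Euc n | ∃ t : ℝ, 0 ≤ t ∧ x = p + t • d} := by
    have h := ((Homeomorph.addLeft p).isClosedEmbedding.comp
      (isClosedEmbedding_smul_left (𝕜 := ℝ) hd)).isClosedMap _ (isClosed_Ici (a := (0 : ℝ)))
    convert h using 1
    ext x
    simp [eq_comm]
  obtain ⟨τ, hτ, rfl⟩ : a ∈ {x : Euc n | ∃ t : ℝ, 0 ≤ t ∧ x = p + t • d} :=
    closure_minimal (hr ▸ inter_subset_left) hcl ha
  have hm := lineMap_mem_of_closure hop hcv haΩ hp h0 h1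
  rw [hr]
  refine ⟨⟨(1 - t) * τ, mul_nonneg (by linarith) hτ, ?_⟩, hm⟩
  rw [AffineMap.lineMap_apply_module]
  module

/-- Prolonging the segment between two points that move along `[a, p]` and `[b, q]` at the same
parameter is the same as moving between the prolongations of `[a, b]` and `[p, q]`. -/
lemma lineMap_lineMap_comm {n : ℕ} (a b p q : Euc n) (t s : ℝ) :
    (AffineMap.lineMap (AffineMap.lineMap a p t : Euc n) (AffineMap.lineMap b q t : Euc n) s
      : Euc n) =
    AffineMap.lineMap (AffineMap.lineMap a b s : Euc n) (AffineMap.lineMap p q s : Euc n) t := by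
  simp only [AffineMap.lineMap_apply_module]
  module

open Filter in
/-- Let `Ω ⊆ ℝⁿ` be an open bounded convex set with its Hilbert metric
and let `r₁, r₂` be rays in `Ω` such that `a(r₁)` and `a(r₂)` lie in the relative
interior of the same proper face of the closure of `Ω`. Then there are sequences `xₖ` on
`r₁` and `yₖ` on `r₂` converging to `a(r₁)` and `a(r₂)` respectively, and a constant `C`
with `d_Ω(xₖ, yₖ) ≤ C` for all `k`. -/
theorem stmt_13 {n : ℕ} (Ω : Set (Euc n))
    (hne : Ω.Nonempty) (hop : IsOpen Ω) (hbd : Bornology.IsBounded Ω) (hcv : Convex ℝ Ω)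
    (r₁ r₂ : Set (Euc n)) (hr₁ : IsRayIn Ω r₁) (hr₂ : IsRayIn Ω r₂)
    (a₁ a₂ : Euc n) (ha₁ : IsBdryLimit Ω r₁ a₁) (ha₂ : IsBdryLimit Ω r₂ a₂)
    (F : Set (Euc n)) (hF : IsProperFace (closure Ω) F)
    (ha₁F : a₁ ∈ intrinsicInterior ℝ F) (ha₂F : a₂ ∈ intrinsicInterior ℝ F) :
    ∃ (x y : ℕ → Euc n) (C : ℝ),
      (∀ k, x k ∈ r₁) ∧ (∀ k, y k ∈ r₂) ∧
      Tendsto x atTop (nhds a₁) ∧ Tendsto y atTop (nhds a₂) ∧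
      ∀ k, hilbertDist Ω (x k) (y k) ≤ C := by
  obtain ⟨p, hp, d, hd, hr₁⟩ := hr₁
  obtain ⟨q, hq, e, he, hr₂⟩ := hr₂
  have hFΩ : F ⊆ closure Ω := hF.1.2.subset
  have hF₁ : a₁ ∈ F := intrinsicInterior_subset ha₁F
  have hF₂ : a₂ ∈ F := intrinsicInterior_subset ha₂F
  have hev := ((((eventually_lineMap_mem ha₁F hF₂).and (eventually_lineMap_mem ha₂F hF₁)).and
    ((eventually_lineMap_mem_open hop q hp).and
      (eventually_lineMap_mem_open hop p hq))).filter_mono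
        (nhdsWithin_le_nhds (s := Ioi (0 : ℝ)))).and self_mem_nhdsWithin
  obtain ⟨ε, ⟨⟨h₁, h₂⟩, h₃, h₄⟩, hε⟩ := hev.exists
  let t : ℕ → ℝ := fun k => 1 / ((k : ℝ) + 1)
  have ht0 : ∀ k, 0 < t k := fun k => Nat.one_div_pos_of_nat
  have ht1 : ∀ k, t k ≤ 1 := fun k => by
    have : (0 : ℝ) ≤ k := k.cast_nonneg
    exact (div_le_one (by linarith)).2 (by linarith)
  have hlim : ∀ a b : Euc n, Tendsto (fun k => (AffineMap.lineMap a b (t k) : Euc n)) atTop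
      (nhds a) := fun a b => by
    have hc : Continuous (AffineMap.lineMap a b : ℝ →ᵃ[ℝ] Euc n) := AffineMap.lineMap_continuous
    have := (hc.tendsto 0).comp (tendsto_one_div_add_atTop_nhds_zero_nat (𝕜 := ℝ))
    rwa [AffineMap.lineMap_apply_zero] at this
  refine ⟨fun k => AffineMap.lineMap a₁ p (t k), fun k => AffineMap.lineMap a₂ q (t k),
    Real.log ((1 + 1 / ε) * (1 + 1 / ε)),
    fun k => lineMap_mem_ray hop hcv hp hd hr₁ ha₁.2 (ht0 k) (ht1 k),
    fun k => lineMap_mem_ray hop hcv hq he hr₂ ha₂.2 (ht0 k) (ht1 k),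
    hlim _ _, hlim _ _, fun k => hilbertDist_le_s13 hop hcv hε
      (lineMap_mem_of_closure hop hcv (hFΩ hF₁) hp (ht0 k) (ht1 k))
      (lineMap_mem_of_closure hop hcv (hFΩ hF₂) hq (ht0 k) (ht1 k)) ?_ ?_⟩
  · rw [lineMap_lineMap_comm]
    exact lineMap_mem_of_closure hop hcv (hFΩ h₁) h₃ (ht0 k) (ht1 k)
  · rw [lineMap_lineMap_comm]
    exact lineMap_mem_of_closure hop hcv (hFΩ h₂) h₄ (ht0 k) (ht1 k)
end
end
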